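/- Let 𝔤 be a finite-dimensional complex simple Lie algebra of type F4, and let (e,h,f) be an sl2-triple in 𝔤 such that e is a distinguished nilpotent element which is not regular. Then e satisfies property (P). -/

import Mathlib

open scoped ComplexOrder

/-- The centralizer `𝔤^e = {x ∈ 𝔤 : ⁅x, e⁆ = 0}` of an element `e`, as a Lie subalgebra. -/
def centralizer (L : Type*) [LieRing L] [LieAlgebra ℂ L] (e : L) : LieSubalgebra ℂ L where
  carrier := {x : L | ⁅x, e⁆ = 0}
  add_mem' := fun {a b} ha hb => by
    simp only [Set.mem_setOf_eq] at *
    rw [add_lie, ha, hb, add_zero]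
  zero_mem' := by simp
  smul_mem' := fun c a ha => by
    simp only [Set.mem_setOf_eq] at *
    rw [smul_lie, ha, smul_zero]
  lie_mem' := fun {a b} ha hb => by
    simp only [Set.mem_setOf_eq] at *
    simp [lie_lie, ha, hb]

/-- Membership in the centre `𝔷(𝔤^e)` of the centralizer of `e`:
`v` centralizes `e` and commutes with every element of `𝔤^e`. -/
def InCenterOfCentralizer (L : Type*) [LieRing L] [LieAlgebra ℂ L] (e v : L) : Prop :=
  ⁅v, e⁆ = 0 ∧ ∀ y : L, ⁅y, e⁆ = 0 → ⁅v, y⁆ = 0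

/-- The centre `𝔷(𝔤^e)` of the centralizer of `e`, as a subspace of `L`. -/
def zCenter (L : Type*) [LieRing L] [LieAlgebra ℂ L] (e : L) : Submodule ℂ L where
  carrier := {v : L | ⁅v, e⁆ = 0 ∧ ∀ y : L, ⁅y, e⁆ = 0 → ⁅v, y⁆ = 0}
  add_mem' := fun {a b} ha hb => ⟨by rw [add_lie, ha.1, hb.1, add_zero],
    fun y hy => by rw [add_lie, ha.2 y hy, hb.2 y hy, add_zero]⟩
  zero_mem' := ⟨zero_lie e, fun y _ => zero_lie y⟩
  smul_mem' := fun c a ha => ⟨by rw [smul_lie, ha.1, smul_zero],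
    fun y hy => by rw [smul_lie, ha.2 y hy, smul_zero]⟩

/-- Property (P) for an `sl₂`-triple `(e, h, f)`: for every nonzero `v ∈ 𝔷(𝔤^e)`, the
eigenspace `𝔷_max` of the restriction of `ad h` to `𝔷(𝔤^e)` for its largest eigenvalue is
contained in `[[f, 𝔤^e], v] = {⁅⁅f, x⁆, v⁆ : x ∈ 𝔤^e}`. -/
def PropertyP (L : Type*) [LieRing L] [LieAlgebra ℂ L] (e h f : L) : Prop :=
  ∀ m : ℂ,
    (∃ z : L, z ≠ 0 ∧ InCenterOfCentralizer L e z ∧ ⁅h, z⁆ = m • z) →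
    (∀ m' : ℂ, (∃ z : L, z ≠ 0 ∧ InCenterOfCentralizer L e z ∧ ⁅h, z⁆ = m' • z) → m' ≤ m) →
    ∀ v : L, InCenterOfCentralizer L e v → v ≠ 0 →
      ∀ z : L, InCenterOfCentralizer L e z → ⁅h, z⁆ = m • z →
        ∃ x : L, ⁅x, e⁆ = 0 ∧ ⁅⁅f, x⁆, v⁆ = z

/-- The stabilizer `{x ∈ 𝔮 : ξ(⁅x, y⁆) = 0 for all y ∈ 𝔮}` of a linear functional `ξ`. -/
def coadStab (Q : Type*) [LieRing Q] [LieAlgebra ℂ Q] (ξ : Module.Dual ℂ Q) : Submodule ℂ Q where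
  carrier := {x : Q | ∀ y : Q, ξ ⁅x, y⁆ = 0}
  add_mem' := fun {a b} ha hb y => by rw [add_lie, map_add, ha y, hb y, add_zero]
  zero_mem' := fun y => by rw [zero_lie, map_zero]
  smul_mem' := fun c a ha y => by rw [smul_lie, map_smul, ha y, smul_zero]

/-- The index of a complex Lie algebra:
`ind 𝔮 = min_{ξ ∈ 𝔮*} dim {x ∈ 𝔮 : ξ(⁅x, y⁆) = 0 for all y ∈ 𝔮}`. -/
noncomputable def lieIndex (Q : Type*) [LieRing Q] [LieAlgebra ℂ Q] : ℕ :=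
  ⨅ ξ : Module.Dual ℂ Q, Module.finrank ℂ ↥(coadStab Q ξ)

/-- A nilpotent element `e` is distinguished if the only `x ∈ 𝔤^e` such that `ad x` is a
semisimple endomorphism of `𝔤` is `x = 0`. -/
def IsDistinguished (L : Type*) [LieRing L] [LieAlgebra ℂ L] (e : L) : Prop :=
  ∀ x : L, ⁅x, e⁆ = 0 → (LieAlgebra.ad ℂ L x).IsSemisimple → x = 0

section Analytic

open Filter Topology NormedSpace

theorem exists_polynomial_eval_eq_charpoly_coeff {V M : Type*} [AddCommGroup V] [Module ℂ V]
    [FiniteDimensional ℂ V] [AddCommGroup M] [Module ℂ M] [FiniteDimensional ℂ M]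
    (φ : V →ₗ[ℂ] Module.End ℂ M) (k : ℕ) (x y : V) :
    ∃ q : Polynomial ℂ, ∀ t : ℂ, q.eval t = (φ (x + t • y)).charpoly.coeff k := by
  classical
  let b := Module.finBasis ℂ V
  let P : MvPolynomial (Fin (Module.finrank ℂ V)) ℂ := (φ.polyCharpoly b).coeff k
  refine ⟨MvPolynomial.aeval
    (fun i => Polynomial.C (b.repr x i) + Polynomial.X * Polynomial.C (b.repr y i)) P, fun t => ?_⟩
  rw [← LinearMap.polyCharpoly_coeff_eval φ b]
  change Polynomial.eval t (MvPolynomial.aeval _ P) = MvPolynomial.eval _ P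
  rw [← Polynomial.coe_aeval_eq_eval, ← AlgHom.coe_toRingHom, AlgHom.coe_toRingHom,
    MvPolynomial.comp_aeval_apply, MvPolynomial.aeval_eq_eval]
  congr 2
  ext i
  simp [Polynomial.aeval_def]
  exact mul_comm _ _

theorem rel_of_eventually_nhds {V M : Type*} [NormedAddCommGroup V] [NormedSpace ℂ V]
    [FiniteDimensional ℂ V] [AddCommGroup M] [Module ℂ M] [FiniteDimensional ℂ M]
    (φ : V →ₗ[ℂ] Module.End ℂ M) (k : ℕ) (r : V → V → Prop)
    (hsymm : ∀ x y, r x y → r y x) (htrans : ∀ x y z, r x y → r y z → r x z)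
    (hloc : ∀ x, (φ x).charpoly.coeff k ≠ 0 →
      ∀ᶠ y in 𝓝 x, (φ y).charpoly.coeff k ≠ 0 → r x y)
    {x y : V} (hx : (φ x).charpoly.coeff k ≠ 0) (hy : (φ y).charpoly.coeff k ≠ 0) : r x y := by
  obtain ⟨q, hq⟩ := exists_polynomial_eval_eq_charpoly_coeff φ k x (y - x)
  have hq0 : q ≠ 0 := by
    intro h
    have := hq 0
    simp [h] at this
    exact hx this.symm
  let s : Set ℂ := {t | q.eval t = 0}
  have hs : s.Finite := by
    refine (q.roots.toFinset.finite_toSet).subset fun t ht => ?_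
    simpa [hq0] using (show q.eval t = 0 from ht)
  have hconn : IsPreconnected sᶜ :=
    (hs.countable.isConnected_compl_of_one_lt_rank (by simp)).isPreconnected
  have key := hconn.induction₂ (fun t u => r (x + t • (y - x)) (x + u • (y - x)))
    (fun t ht => ?_) (fun _ _ _ _ _ _ => htrans _ _ _) (fun _ _ _ _ => hsymm _ _)
    (x := 0) (y := 1) (by simpa [s, hq] using hx) (by simpa [s, hq] using hy)
  · simpa using key
  · have hc : Continuous fun u : ℂ => x + u • (y - x) := by fun_prop
    have h1 := hc.continuousAt.eventually (hloc (x + t • (y - x)) (by simpa [s, hq] using ht))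
    refine (eventually_nhdsWithin_of_eventually_nhds h1).mp ?_
    filter_upwards [self_mem_nhdsWithin] with u hu h2
    exact h2 (by simpa [s, hq] using hu)

theorem exists_charpoly_coeff_ne_zero_of_mem_nhds {V M : Type*} [NormedAddCommGroup V]
    [NormedSpace ℂ V] [FiniteDimensional ℂ V] [AddCommGroup M] [Module ℂ M] [FiniteDimensional ℂ M]
    (φ : V →ₗ[ℂ] Module.End ℂ M) (k : ℕ) (x y : V) (hy : (φ y).charpoly.coeff k ≠ 0)
    {s : Set V} (hs : s ∈ 𝓝 x) : ∃ z ∈ s, (φ z).charpoly.coeff k ≠ 0 := by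
  obtain ⟨q, hq⟩ := exists_polynomial_eval_eq_charpoly_coeff φ k x (y - x)
  have hq0 : q ≠ 0 := by
    intro h
    have := hq 1
    simp [h] at this
    exact hy this.symm
  have hc : Continuous fun u : ℂ => x + u • (y - x) := by fun_prop
  have h1 : ∀ᶠ t : ℂ in 𝓝[≠] 0, x + t • (y - x) ∈ s :=
    eventually_nhdsWithin_of_eventually_nhds (hc.continuousAt.eventually (by simpa using hs))
  have h2 : ∀ᶠ t : ℂ in 𝓝[≠] 0, q.eval t ≠ 0 := by
    have hfin : {t | q.eval t = 0}.Finite := by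
      refine (q.roots.toFinset.finite_toSet).subset fun t ht => ?_
      simpa [hq0] using (show q.eval t = 0 from ht)
    have : ∀ᶠ t : ℂ in 𝓝 0, t ∉ {t | q.eval t = 0} \ {0} :=
      (hfin.subset Set.sdiff_subset).isClosed.isOpen_compl.mem_nhds (by simp)
    filter_upwards [eventually_nhdsWithin_of_eventually_nhds this, self_mem_nhdsWithin]
      with t ht h0 h
    exact ht ⟨h, h0⟩
  obtain ⟨t, ht1, ht2⟩ := (h1.and h2).exists
  exact ⟨_, ht1, by rwa [← hq]⟩

variable {V : Type*} [NormedAddCommGroup V] [NormedSpace ℂ V] [FiniteDimensional ℂ V]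

theorem eventually_exists_exp_apply_add {K H : Type*} [NormedAddCommGroup K] [NormedSpace ℂ K]
    [FiniteDimensional ℂ K] [NormedAddCommGroup H] [NormedSpace ℂ H] [FiniteDimensional ℂ H]
    (A : K →L[ℂ] V →L[ℂ] V) (ι : H →L[ℂ] V) (x : V)
    (hsurj : ∀ v : V, ∃ u y, A u x + ι y = v) {s : Set H} (hs : s ∈ 𝓝 (0 : H)) :
    ∀ᶠ v in 𝓝 x, ∃ u, ∃ y ∈ s, v = exp (A u) (x + ι y) := by
  have := FiniteDimensional.complete ℂ V
  have := FiniteDimensional.complete ℂ K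
  have := FiniteDimensional.complete ℂ H
  let Φ : K × H → V := fun p => exp (A p.1) (x + ι p.2)
  have h1 : HasStrictFDerivAt (fun p : K × H => exp (A p.1))
      (A.comp (ContinuousLinearMap.fst ℂ K H)) 0 := by
    have h0 : HasStrictFDerivAt (exp : (V →L[ℂ] V) → (V →L[ℂ] V))
        (1 : (V →L[ℂ] V) →L[ℂ] (V →L[ℂ] V))
        ((A.comp (ContinuousLinearMap.fst ℂ K H)) 0) := by
      simpa using hasStrictFDerivAt_exp_zero (𝕂 := ℂ) (𝔸 := V →L[ℂ] V)
    exact h0.comp (0 : K × H) (A.comp (ContinuousLinearMap.fst ℂ K H)).hasStrictFDerivAt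
  have h2 : HasStrictFDerivAt (fun p : K × H => x + ι p.2)
      (ι.comp (ContinuousLinearMap.snd ℂ K H)) 0 :=
    ((ι.comp (ContinuousLinearMap.snd ℂ K H)).hasStrictFDerivAt).const_add x
  have h3 := h1.clm_apply h2
  have h4 := h3.map_nhds_eq_of_surj (by
    rw [LinearMap.range_eq_top]
    intro v
    obtain ⟨u, y, h⟩ := hsurj v
    refine ⟨(u, y), ?_⟩
    simp [← h, exp_zero, add_comm])
  have h5 : exp (A (0 : K × H).1) (x + ι (0 : K × H).2) = x := by simp [exp_zero]
  rw [h5] at h4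
  rw [← h4]
  have h6 : ∀ᶠ p : K × H in 𝓝 0, p.2 ∈ s := (continuous_snd.tendsto (0 : K × H)).eventually hs
  exact eventually_map.2 (h6.mono fun p hp => ⟨p.1, p.2, hp, rfl⟩)

theorem exp_apply_eq_tsum (D : V →L[ℂ] V) (v : V) :
    HasSum (fun n : ℕ => ((n.factorial : ℂ)⁻¹) • (D ^ n) v) (exp D v) := by
  have := FiniteDimensional.complete ℂ V
  have := NormedSpace.exp_series_hasSum_exp' (𝕂 := ℂ) D
  simpa using this.mapL (ContinuousLinearMap.apply ℂ V v)

theorem exp_apply_eq_sum (D : V →L[ℂ] V) (v : V) {n : ℕ} (h : (D ^ n) v = 0) :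
    exp D v = ∑ k ∈ Finset.range n, ((k.factorial : ℂ)⁻¹) • (D ^ k) v := by
  refine (exp_apply_eq_tsum D v).unique (hasSum_sum_of_ne_finset_zero fun k hk => ?_)
  obtain ⟨j, rfl⟩ := Nat.exists_eq_add_of_le' (not_lt.1 (Finset.mem_range.not.1 hk))
  simp [pow_add, h]

theorem map_exp_apply {W : Type*} [NormedAddCommGroup W] [NormedSpace ℂ W]
    [FiniteDimensional ℂ W] (T : V →L[ℂ] W) (D : V →L[ℂ] V) (D' : W →L[ℂ] W)
    (h : ∀ v, T (D v) = D' (T v)) (v : V) : T (exp D v) = exp D' (T v) := by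
  have h1 : ∀ (n : ℕ) v, T ((D ^ n) v) = (D' ^ n) (T v) := by
    intro n
    induction n with
    | zero => simp
    | succ n ih => intro v; rw [pow_succ, pow_succ, mul_apply_eq_comp, mul_apply_eq_comp, ih, h]
  refine HasSum.unique ?_ (exp_apply_eq_tsum D' (T v))
  have h2 := (exp_apply_eq_tsum D v).mapL T
  simp only [map_smul, h1] at h2
  exact h2

theorem exp_apply_bilinear (B : V →L[ℂ] V →L[ℂ] V) (D : V →L[ℂ] V)
    (hD : ∀ x y, D (B x y) = B (D x) y + B x (D y)) (x y : V) :
    exp D (B x y) = B (exp D x) (exp D y) := by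
  have := FiniteDimensional.complete ℂ V
  have hd : ∀ (D : V →L[ℂ] V) (t : ℂ), HasDerivAt (fun t : ℂ => exp (t • D))
      (exp (t • D) * D) t := fun D t => hasDerivAt_exp_smul_const D t
  have hc : ∀ t : ℂ, exp (t • D) * D = D * exp (t • D) := fun t =>
    (((Commute.refl D).smul_left t).exp_left).eq
  have hd1 : ∀ (t : ℂ) (v : V), HasDerivAt (fun t : ℂ => exp (t • D) v)
      (D (exp (t • D) v)) t := by
    intro t v
    have := (hd D t).clm_apply (hasDerivAt_const t v)
    rw [hc] at this
    simpa using this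
  let F : ℂ → V := fun t => exp (t • (-D)) (B (exp (t • D) x) (exp (t • D) y))
  have hF : ∀ t, HasDerivAt F 0 t := by
    intro t
    have h1 : HasDerivAt (fun t => B (exp (t • D) x)) (B (D (exp (t • D) x))) t :=
      B.hasFDerivAt.comp_hasDerivAt t (hd1 t x)
    have h2 := h1.clm_apply (hd1 t y)
    have h3 := (hd (-D) t).clm_apply h2
    convert h3 using 1
    simp [hD]
  have hconst : F 1 = F 0 :=
    is_const_of_deriv_eq_zero (fun t => (hF t).differentiableAt) (fun t => (hF t).deriv) 1 0
  have hB : exp (-D) (B (exp D x) (exp D y)) = B x y := by simpa [F, exp_zero] using hconst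
  let : NormedAlgebra ℚ (V →L[ℂ] V) := NormedAlgebra.restrictScalars ℚ ℂ _
  rw [← hB, ← mul_apply_eq_comp, ← exp_add_of_commute ((Commute.refl D).neg_right)]
  simp [exp_zero]

end Analytic

section LieExp

open Filter Topology

variable {M N : Type*} [AddCommGroup M] [Module ℂ M] [FiniteDimensional ℂ M]
  [AddCommGroup N] [Module ℂ N] [FiniteDimensional ℂ N]

/-- Coordinates on a finite-dimensional complex vector space, used to transport a topology. -/
noncomputable def coordEquiv (M : Type*) [AddCommGroup M] [Module ℂ M] [FiniteDimensional ℂ M] :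
    M ≃ₗ[ℂ] (Fin (Module.finrank ℂ M) → ℂ) :=
  (Module.finBasis ℂ M).equivFun

/-- An endomorphism read in coordinates. -/
noncomputable def coordEnd :
    Module.End ℂ M →ₗ[ℂ]
      (Fin (Module.finrank ℂ M) → ℂ) →L[ℂ] (Fin (Module.finrank ℂ M) → ℂ) :=
  LinearMap.toContinuousLinearMap.toLinearMap ∘ₗ (coordEquiv M).conj.toLinearMap

theorem coordEnd_apply (D : Module.End ℂ M) (v : Fin (Module.finrank ℂ M) → ℂ) :
    coordEnd D v = coordEquiv M (D ((coordEquiv M).symm v)) := rfl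

theorem coordEnd_pow_apply (D : Module.End ℂ M) (n : ℕ) (v : M) :
    (coordEnd D ^ n) (coordEquiv M v) = coordEquiv M ((D ^ n) v) := by
  induction n generalizing v with
  | zero => simp
  | succ n ih =>
    rw [pow_succ, pow_succ, mul_apply_eq_comp, coordEnd_apply, LinearEquiv.symm_apply_apply, ih]
    rfl

/-- The exponential of an endomorphism of a finite-dimensional complex vector space. -/
noncomputable def endExp (D : Module.End ℂ M) : Module.End ℂ M :=
  (coordEquiv M).symm.conj (NormedSpace.exp (coordEnd D)).toLinearMap

theorem coordEquiv_endExp (D : Module.End ℂ M) (v : M) :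
    coordEquiv M (endExp D v) = NormedSpace.exp (coordEnd D) (coordEquiv M v) := by
  simp [endExp, LinearEquiv.conj_apply]

theorem endExp_apply_eq_sum (D : Module.End ℂ M) (v : M) {n : ℕ} (h : (D ^ n) v = 0) :
    endExp D v = ∑ k ∈ Finset.range n, ((k.factorial : ℂ)⁻¹) • (D ^ k) v := by
  apply (coordEquiv M).injective
  rw [coordEquiv_endExp, exp_apply_eq_sum (n := n) _ _ (by rw [coordEnd_pow_apply, h, map_zero])]
  simp only [coordEnd_pow_apply, map_sum, map_smul]

theorem map_endExp (T : M →ₗ[ℂ] N) (D : Module.End ℂ M) (D' : Module.End ℂ N)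
    (h : ∀ v, T (D v) = D' (T v)) (v : M) : T (endExp D v) = endExp D' (T v) := by
  apply (coordEquiv N).injective
  have := map_exp_apply (LinearMap.toContinuousLinearMap
    ((coordEquiv N).toLinearMap ∘ₗ T ∘ₗ (coordEquiv M).symm.toLinearMap)) (coordEnd D) (coordEnd D')
    (by intro v; simp [coordEnd_apply, h]) (coordEquiv M v)
  rw [coordEquiv_endExp]
  rw [← coordEquiv_endExp] at this
  simpa using this

theorem endExp_neg_apply_endExp (D : Module.End ℂ M) (v : M) : endExp (-D) (endExp D v) = v := by
  apply (coordEquiv M).injective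
  let : NormedAlgebra ℚ ((Fin (Module.finrank ℂ M) → ℂ) →L[ℂ] (Fin (Module.finrank ℂ M) → ℂ)) :=
    NormedAlgebra.restrictScalars ℚ ℂ _
  rw [coordEquiv_endExp, coordEquiv_endExp, ← mul_apply_eq_comp, map_neg,
    ← NormedSpace.exp_add_of_commute ((Commute.refl (coordEnd D)).neg_left)]
  simp [NormedSpace.exp_zero]

theorem eventually_exists_endExp_apply_add {K H : Type*} [AddCommGroup K] [Module ℂ K]
    [FiniteDimensional ℂ K] [AddCommGroup H] [Module ℂ H] [FiniteDimensional ℂ H]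
    (A : K →ₗ[ℂ] Module.End ℂ M) (ι : H →ₗ[ℂ] M) (x : M)
    (hsurj : ∀ v : M, ∃ u y, A u x + ι y = v) {s : Set (Fin (Module.finrank ℂ H) → ℂ)}
    (hs : s ∈ 𝓝 0) :
    ∀ᶠ v in 𝓝 (coordEquiv M x), ∃ u y, coordEquiv H y ∈ s ∧
      (coordEquiv M).symm v = endExp (A u) (x + ι y) := by
  have := eventually_exists_exp_apply_add
    (LinearMap.toContinuousLinearMap (coordEnd ∘ₗ A ∘ₗ (coordEquiv K).symm.toLinearMap))
    (LinearMap.toContinuousLinearMap ((coordEquiv M).toLinearMap ∘ₗ ι ∘ₗ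
      (coordEquiv H).symm.toLinearMap)) (coordEquiv M x) (fun v => by
      obtain ⟨u, y, h⟩ := hsurj ((coordEquiv M).symm v)
      refine ⟨coordEquiv K u, coordEquiv H y, ?_⟩
      apply (coordEquiv M).symm.injective
      simp [coordEnd_apply, h]) hs
  filter_upwards [this]
  rintro v ⟨u, y, hy, rfl⟩
  refine ⟨(coordEquiv K).symm u, (coordEquiv H).symm y, by simpa using hy, ?_⟩
  apply (coordEquiv M).injective
  simp [coordEquiv_endExp]

variable {L : Type*} [LieRing L] [LieAlgebra ℂ L] [FiniteDimensional ℂ L]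

theorem endExp_ad_lie (u x y : L) :
    endExp (LieAlgebra.ad ℂ L u) ⁅x, y⁆ =
      ⁅endExp (LieAlgebra.ad ℂ L u) x, endExp (LieAlgebra.ad ℂ L u) y⁆ := by
  let β := coordEquiv L
  let B : (Fin (Module.finrank ℂ L) → ℂ) →L[ℂ] (Fin (Module.finrank ℂ L) → ℂ) →L[ℂ]
      (Fin (Module.finrank ℂ L) → ℂ) :=
    LinearMap.toContinuousLinearMap
      (coordEnd ∘ₗ (LieAlgebra.ad ℂ L : L →ₗ[ℂ] Module.End ℂ L) ∘ₗ β.symm.toLinearMap)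
  have hB : ∀ v w, B v w = β ⁅β.symm v, β.symm w⁆ := fun v w => rfl
  have := exp_apply_bilinear B (coordEnd (LieAlgebra.ad ℂ L u)) (by
    intro v w
    simp only [hB, coordEnd_apply]
    rw [← map_add]
    simp [β]) (β x) (β y)
  apply β.injective
  simp only [hB] at this
  simpa [β, ← coordEquiv_endExp] using this

/-- The inner automorphism `exp (ad u)`. -/
noncomputable def lieExp (u : L) : L ≃ₗ⁅ℂ⁆ L where
  __ := endExp (LieAlgebra.ad ℂ L u)
  map_lie' := endExp_ad_lie u _ _
  invFun := endExp (-LieAlgebra.ad ℂ L u)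
  left_inv := endExp_neg_apply_endExp _
  right_inv v := by simpa using endExp_neg_apply_endExp (-LieAlgebra.ad ℂ L u) v

theorem lieExp_apply (u v : L) : lieExp u v = endExp (LieAlgebra.ad ℂ L u) v := rfl

theorem lieExp_apply_eq_sum (u v : L) {n : ℕ} (h : (LieAlgebra.ad ℂ L u ^ n) v = 0) :
    lieExp u v = ∑ k ∈ Finset.range n, ((k.factorial : ℂ)⁻¹) • (LieAlgebra.ad ℂ L u ^ k) v :=
  endExp_apply_eq_sum _ _ h

/-- Elements of `W` on which `K` acts with full orbit are conjugate under automorphisms fixing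
the centralizer of `K`. -/
theorem exists_lieEquiv_of_surjective (K W : Submodule ℂ L) (hKW : ∀ u ∈ K, ∀ w ∈ W, ⁅u, w⁆ ∈ W)
    (hdim : Module.finrank ℂ K = Module.finrank ℂ W) {x y : L} (hx : x ∈ W) (hy : y ∈ W)
    (hx' : ∀ w ∈ W, ∃ u ∈ K, ⁅u, x⁆ = w) (hy' : ∀ w ∈ W, ∃ u ∈ K, ⁅u, y⁆ = w) :
    ∃ g : L ≃ₗ⁅ℂ⁆ L, g x = y ∧ ∀ h, (∀ u ∈ K, ⁅u, h⁆ = 0) → g h = h := by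
  let A : K →ₗ[ℂ] Module.End ℂ W :=
    { toFun := fun u => (LieAlgebra.ad ℂ L u).restrict (hKW u u.2)
      map_add' := fun u v => by ext w; exact add_lie (u : L) (v : L) (w : L)
      map_smul' := fun c u => by ext w; exact smul_lie c (u : L) (w : L) }
  have hA : ∀ u w, ((A u w : W) : L) = ⁅(u : L), (w : L)⁆ := fun u w => rfl
  let θ : W ≃ₗ[ℂ] K := LinearEquiv.ofFinrankEq W K hdim.symm
  let φ : W →ₗ[ℂ] Module.End ℂ W :=
    { toFun := fun w => A.flip w ∘ₗ θ.toLinearMap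
      map_add' := fun u v => by ext; simp
      map_smul' := fun c u => by ext; simp }
  have hφ : ∀ w : W, (φ w).charpoly.coeff 0 ≠ 0 ↔ ∀ v : W, ∃ u, A u w = v := by
    intro w
    have h1 : (φ w).charpoly.coeff 0 ≠ 0 ↔ IsUnit (φ w) := by
      rw [LinearMap.isUnit_iff_isUnit_det, isUnit_iff_ne_zero, LinearMap.det_eq_sign_charpoly_coeff]
      simp
    rw [h1, LinearMap.isUnit_iff_range_eq_top, LinearMap.range_eq_top]
    constructor
    · intro h v
      obtain ⟨u, hu⟩ := h v
      exact ⟨θ u, hu⟩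
    · intro h v
      obtain ⟨u, hu⟩ := h v
      exact ⟨θ.symm u, by simpa [φ] using hu⟩
  let r : W → W → Prop := fun a b => ∃ g : L ≃ₗ⁅ℂ⁆ L, g a = b ∧ ∀ h, (∀ u ∈ K, ⁅u, h⁆ = 0) → g h = h
  have key := rel_of_eventually_nhds (φ ∘ₗ (coordEquiv W).symm.toLinearMap) 0
    (fun a b => r ((coordEquiv W).symm a) ((coordEquiv W).symm b)) ?_ ?_ ?_
    (x := coordEquiv W ⟨x, hx⟩) (y := coordEquiv W ⟨y, hy⟩) ?_ ?_
  · simpa [r] using key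
  · rintro a b ⟨g, hg, hg'⟩
    refine ⟨g.symm, by simp [← hg], fun h hh => ?_⟩
    conv_lhs => rw [← hg' h hh]
    exact g.symm_apply_apply h
  · rintro a b c ⟨g, hg, hg'⟩ ⟨k, hk, hk'⟩
    exact ⟨g.trans k, by simp [hg, hk],
      fun h hh => by rw [LieEquiv.trans_apply, hg' h hh, hk' h hh]⟩
  · intro a ha
    have ha' := (hφ _).1 ha
    have := eventually_exists_endExp_apply_add A (0 : (Fin 0 → ℂ) →ₗ[ℂ] W)
      ((coordEquiv W).symm a) (fun v => by
        obtain ⟨u, hu⟩ := ha' v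
        exact ⟨u, 0, by simpa using hu⟩) Filter.univ_mem
    rw [LinearEquiv.apply_symm_apply] at this
    filter_upwards [this]
    rintro b ⟨u, _, -, hu⟩ -
    refine ⟨lieExp (u : L), ?_, fun h hh => ?_⟩
    · rw [hu, lieExp_apply, LinearMap.zero_apply, add_zero]
      exact (map_endExp W.subtype (A u) (LieAlgebra.ad ℂ L (u : L)) (fun v => rfl) _).symm
    · rw [lieExp_apply_eq_sum (n := 1) _ _ (by simp [hh u u.2])]
      simp
  all_goals
    refine (hφ _).2 fun v => ?_
    rw [LinearEquiv.coe_coe, LinearEquiv.symm_apply_apply]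
  · obtain ⟨u, hu, h⟩ := hx' v v.2
    exact ⟨⟨u, hu⟩, Subtype.ext h⟩
  · obtain ⟨u, hu, h⟩ := hy' v v.2
    exact ⟨⟨u, hu⟩, Subtype.ext h⟩

omit [FiniteDimensional ℂ L] in
theorem lieEquiv_mem_engel_iff (g : L ≃ₗ⁅ℂ⁆ L) (x y : L) :
    g y ∈ LieSubalgebra.engel ℂ (g x) ↔ y ∈ LieSubalgebra.engel ℂ x := by
  have h : ∀ n : ℕ, ((LieAlgebra.ad ℂ L (g x)) ^ n) (g y) = g ((LieAlgebra.ad ℂ L x ^ n) y) := by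
    intro n
    induction n generalizing y with
    | zero => simp
    | succ n ih =>
      rw [pow_succ, pow_succ, Module.End.mul_apply, Module.End.mul_apply, LieAlgebra.ad_apply,
        LieAlgebra.ad_apply, ← LieEquiv.map_lie, ih]
  simp [LieSubalgebra.mem_engel_iff, h]

omit [FiniteDimensional ℂ L] in
theorem finrank_engel_lieEquiv (g : L ≃ₗ⁅ℂ⁆ L) (x : L) :
    Module.finrank ℂ (LieSubalgebra.engel ℂ (g x)) =
      Module.finrank ℂ (LieSubalgebra.engel ℂ x) := by
  refine (LinearEquiv.finrank_eq (LinearEquiv.ofBijective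
    ((g : L →ₗ[ℂ] L).restrict (p := (LieSubalgebra.engel ℂ x).toSubmodule)
      (q := (LieSubalgebra.engel ℂ (g x)).toSubmodule)
      fun y hy => (lieEquiv_mem_engel_iff g x y).2 hy) ⟨?_, ?_⟩)).symm
  · intro a b h
    exact Subtype.ext (g.injective (congrArg Subtype.val h))
  · rintro ⟨b, hb⟩
    exact ⟨⟨g.symm b, (lieEquiv_mem_engel_iff g x _).1 (by rwa [LieEquiv.apply_symm_apply])⟩,
      Subtype.ext (g.apply_symm_apply b)⟩

theorem exists_lie_add_engel_eq (x v : L) :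
    ∃ u : L, ∃ y ∈ LieSubalgebra.engel ℂ x, ⁅u, x⁆ + y = v := by
  have h := LinearMap.isCompl_iSup_ker_pow_iInf_range_pow (LieAlgebra.ad ℂ L x)
  obtain ⟨y, hy, w, hw, rfl⟩ := Submodule.mem_sup.1 (h.sup_eq_top.ge (Submodule.mem_top (x := v)))
  obtain ⟨u, hu⟩ := (Submodule.mem_iInf _).1 hw 1
  refine ⟨-u, y, ?_, ?_⟩
  · rw [LieSubalgebra.mem_engel_iff]
    rwa [Submodule.mem_iSup_of_directed] at hy
    exact Monotone.directed_le (LieAlgebra.ad ℂ L x).iterateKer.monotone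
  · rw [add_comm, ← hu]
    simp

/-- Near an element whose Engel subalgebra is minimal, every element is conjugate to a small
translate inside that subalgebra. -/
theorem eventually_exists_lieEquiv_engel (x : L)
    (hx : ∀ y ∈ LieSubalgebra.engel ℂ x, LieSubalgebra.engel ℂ x ≤ LieSubalgebra.engel ℂ y) :
    ∀ᶠ v in 𝓝 (coordEquiv L x), ∃ (g : L ≃ₗ⁅ℂ⁆ L) (y : L), (coordEquiv L).symm v = g y ∧
      LieSubalgebra.engel ℂ x ≤ LieSubalgebra.engel ℂ y := by
  have := eventually_exists_endExp_apply_add (LieAlgebra.ad ℂ L : L →ₗ[ℂ] Module.End ℂ L)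
    (LieSubalgebra.engel ℂ x).toSubmodule.subtype x (fun v => by
      obtain ⟨u, y, hy, h⟩ := exists_lie_add_engel_eq x v
      exact ⟨u, ⟨y, hy⟩, h⟩) Filter.univ_mem
  filter_upwards [this]
  rintro v ⟨u, y, -, h⟩
  exact ⟨lieExp u, x + y, h, hx _ (add_mem (LieSubalgebra.self_mem_engel ℂ x) y.2)⟩

theorem charpoly_coeff_rank_ne_zero_iff (x : L) :
    ((LieAlgebra.ad ℂ L : L →ₗ[ℂ] Module.End ℂ L) x).charpoly.coeff (LieAlgebra.rank ℂ L) ≠ 0 ↔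
      Module.finrank ℂ (LieSubalgebra.engel ℂ x) = LieAlgebra.rank ℂ L := by
  rw [← LieAlgebra.isRegular_iff_finrank_engel_eq_rank, LieAlgebra.isRegular_def]
  rfl

theorem finrank_engel_eq_rank_of_le (x : L)
    (hx : ∀ y ∈ LieSubalgebra.engel ℂ x, LieSubalgebra.engel ℂ x ≤ LieSubalgebra.engel ℂ y) :
    Module.finrank ℂ (LieSubalgebra.engel ℂ x) = LieAlgebra.rank ℂ L := by
  obtain ⟨r, hr⟩ := LieAlgebra.exists_isRegular ℂ L
  rw [LieAlgebra.isRegular_iff_finrank_engel_eq_rank, ← charpoly_coeff_rank_ne_zero_iff] at hr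
  obtain ⟨z, ⟨g, y, h, hy⟩, hz⟩ := exists_charpoly_coeff_ne_zero_of_mem_nhds
    ((LieAlgebra.ad ℂ L : L →ₗ[ℂ] Module.End ℂ L) ∘ₗ (coordEquiv L).symm.toLinearMap)
    (LieAlgebra.rank ℂ L) (coordEquiv L x) (coordEquiv L r) (by simpa using hr)
    (eventually_exists_lieEquiv_engel x hx)
  rw [LinearMap.comp_apply, LinearEquiv.coe_coe, h, charpoly_coeff_rank_ne_zero_iff,
    finrank_engel_lieEquiv] at hz
  refine le_antisymm (hz ▸ ?_) (LieAlgebra.rank_le_finrank_engel ℂ x)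
  exact Submodule.finrank_mono (s := (LieSubalgebra.engel ℂ x).toSubmodule) hy

theorem engel_le_engel_of_finrank_eq_rank {x : L}
    (hx : Module.finrank ℂ (LieSubalgebra.engel ℂ x) = LieAlgebra.rank ℂ L) :
    ∀ y ∈ LieSubalgebra.engel ℂ x, LieSubalgebra.engel ℂ x ≤ LieSubalgebra.engel ℂ y := by
  intro y hy
  refine LieAlgebra.engel_isBot_of_isMin (Cardinal.natCast_le_aleph0.trans
    (Cardinal.infinite_iff.1 inferInstance)) (LieSubalgebra.engel ℂ x)
    ⟨LieSubalgebra.engel ℂ x, x, LieSubalgebra.self_mem_engel ℂ x, rfl⟩ le_rfl ?_ ⟨_, y, hy, rfl⟩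
  rintro ⟨_, z, hz, rfl⟩ hzx
  replace hzx : LieSubalgebra.engel ℂ z ≤ LieSubalgebra.engel ℂ x := hzx
  have h : LieSubalgebra.engel ℂ z = LieSubalgebra.engel ℂ x :=
    LieSubalgebra.toSubmodule_injective (Submodule.eq_of_le_of_finrank_le hzx
      (hx.trans_le (LieAlgebra.rank_le_finrank_engel ℂ z)))
  exact h.ge

/-- Engel subalgebras of regular elements are conjugate. -/
theorem exists_lieEquiv_map_engel {x y : L}
    (hx : Module.finrank ℂ (LieSubalgebra.engel ℂ x) = LieAlgebra.rank ℂ L)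
    (hy : Module.finrank ℂ (LieSubalgebra.engel ℂ y) = LieAlgebra.rank ℂ L) :
    ∃ g : L ≃ₗ⁅ℂ⁆ L, ∀ z, g z ∈ LieSubalgebra.engel ℂ y ↔ z ∈ LieSubalgebra.engel ℂ x := by
  have key := rel_of_eventually_nhds
    ((LieAlgebra.ad ℂ L : L →ₗ[ℂ] Module.End ℂ L) ∘ₗ (coordEquiv L).symm.toLinearMap)
    (LieAlgebra.rank ℂ L)
    (fun a b => ∃ g : L ≃ₗ⁅ℂ⁆ L, ∀ z, g z ∈ LieSubalgebra.engel ℂ ((coordEquiv L).symm b) ↔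
      z ∈ LieSubalgebra.engel ℂ ((coordEquiv L).symm a)) ?_ ?_ ?_
    (x := coordEquiv L x) (y := coordEquiv L y) ?_ ?_
  · simpa using key
  · rintro a b ⟨g, hg⟩
    exact ⟨g.symm, fun z => by rw [← hg, LieEquiv.apply_symm_apply]⟩
  · rintro a b c ⟨g, hg⟩ ⟨k, hk⟩
    exact ⟨g.trans k, fun z => by rw [LieEquiv.trans_apply, hk, hg]⟩
  · intro a ha
    rw [LinearMap.comp_apply, LinearEquiv.coe_coe, charpoly_coeff_rank_ne_zero_iff] at ha
    have := eventually_exists_lieEquiv_engel _ (engel_le_engel_of_finrank_eq_rank ha)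
    rw [LinearEquiv.apply_symm_apply] at this
    filter_upwards [this]
    rintro b ⟨g, y, hgy, hle⟩ hb
    rw [LinearMap.comp_apply, LinearEquiv.coe_coe, charpoly_coeff_rank_ne_zero_iff, hgy,
      finrank_engel_lieEquiv] at hb
    have heq : (LieSubalgebra.engel ℂ ((coordEquiv L).symm a)).toSubmodule =
        (LieSubalgebra.engel ℂ y).toSubmodule :=
      Submodule.eq_of_le_of_finrank_eq hle (ha.trans hb.symm)
    refine ⟨g, fun z => ?_⟩
    rw [hgy, lieEquiv_mem_engel_iff, ← LieSubalgebra.mem_toSubmodule, ← heq,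
      LieSubalgebra.mem_toSubmodule]
  · simpa using (charpoly_coeff_rank_ne_zero_iff x).2 hx
  · simpa using (charpoly_coeff_rank_ne_zero_iff y).2 hy

theorem exists_mem_engel_finrank_eq_rank {h : L}
    (hh : ∀ y ∈ LieSubalgebra.engel ℂ h, ⁅h, y⁆ = 0) :
    ∃ x : L, Module.finrank ℂ (LieSubalgebra.engel ℂ x) = LieAlgebra.rank ℂ L ∧
      h ∈ LieSubalgebra.engel ℂ x := by
  let S : Set L := {x | x ∈ LieSubalgebra.engel ℂ h ∧
    LieSubalgebra.engel ℂ x ≤ LieSubalgebra.engel ℂ h}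
  obtain ⟨x, ⟨hxh, hle⟩, hmin⟩ := exists_minimalFor_of_wellFoundedLT (· ∈ S)
    (fun x => Module.finrank ℂ (LieSubalgebra.engel ℂ x))
    ⟨h, LieSubalgebra.self_mem_engel ℂ h, le_rfl⟩
  refine ⟨x, finrank_engel_eq_rank_of_le x fun y hy => ?_, ?_⟩
  · refine LieAlgebra.engel_isBot_of_isMin (Cardinal.natCast_le_aleph0.trans
      (Cardinal.infinite_iff.1 inferInstance)) (LieSubalgebra.engel ℂ x)
      ⟨LieSubalgebra.engel ℂ x, x, LieSubalgebra.self_mem_engel ℂ x, rfl⟩ le_rfl ?_ ⟨_, y, hy, rfl⟩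
    rintro ⟨_, z, hz, rfl⟩ hzx
    have hzx' : LieSubalgebra.engel ℂ z ≤ LieSubalgebra.engel ℂ x := hzx
    have : LieSubalgebra.engel ℂ z = LieSubalgebra.engel ℂ x :=
      LieSubalgebra.toSubmodule_injective (Submodule.eq_of_le_of_finrank_le hzx'
        (hmin ⟨hle hz, hzx'.trans hle⟩ (Submodule.finrank_mono
          (s := (LieSubalgebra.engel ℂ z).toSubmodule) hzx')))
    exact this.ge
  · rw [LieSubalgebra.mem_engel_iff]
    exact ⟨1, by rw [pow_one, LieAlgebra.ad_apply, ← lie_skew, hh x hxh, neg_zero]⟩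

end LieExp

section Distinguished

open Module

variable {L : Type*} [LieRing L] [LieAlgebra ℂ L] [FiniteDimensional ℂ L]

section Jordan

variable [LieAlgebra.IsKilling ℂ L]

/-- The abstract Jordan decomposition in a Lie algebra with nondegenerate Killing form. -/
theorem exists_ad_isSemisimple_isNilpotent_sub (x : L) :
    ∃ s : L, (LieAlgebra.ad ℂ L s).IsSemisimple ∧
      IsNilpotent (LieAlgebra.ad ℂ L x - LieAlgebra.ad ℂ L s) ∧
      ∀ (y : L) (c : ℂ), ⁅x, y⁆ = c • y → ⁅s, y⁆ = c • y := by
  obtain ⟨N, -, S, hS₀, hN, hS, hSN⟩ := (LieAlgebra.ad ℂ L x).exists_isNilpotent_isSemisimple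
  replace hS₀ : Commute (LieAlgebra.ad ℂ L x) S := Algebra.commute_of_mem_adjoin_self hS₀
  rw [eq_sub_of_add_eq hSN.symm] at hN
  have aux {c : ℂ} {y : L} (hy : y ∈ (LieAlgebra.ad ℂ L x).maxGenEigenspace c) : S y = c • y := by
    rw [End.maxGenEigenspace_eq] at hy
    rw [End.apply_eq_of_mem_of_comm_of_isFinitelySemisimple_of_isNil hy hS₀
      hS.isFinitelySemisimple hN]
  have htop : ⨆ c, (LieAlgebra.ad ℂ L x).maxGenEigenspace c = ⊤ :=
    End.iSup_maxGenEigenspace_eq_top _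
  have h_der (y z : L) : S ⁅y, z⁆ = ⁅S y, z⁆ + ⁅y, S z⁆ := by
    have hy : y ∈ ⨆ c, (LieAlgebra.ad ℂ L x).maxGenEigenspace c := by simp [htop]
    have hz : z ∈ ⨆ c, (LieAlgebra.ad ℂ L x).maxGenEigenspace c := by simp [htop]
    induction hy using Submodule.iSup_induction' with
    | mem a y hy =>
      induction hz using Submodule.iSup_induction' with
      | mem b z hz =>
        have hyz : ⁅y, z⁆ ∈ (LieAlgebra.ad ℂ L x).maxGenEigenspace (a + b) :=
          LieModule.lie_mem_maxGenEigenspace_toEnd hy hz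
        rw [aux hy, aux hz, aux hyz, smul_lie, lie_smul, ← add_smul]
      | zero => simp
      | add _ _ _ _ h h' => simp only [lie_add, map_add, h, h']; abel
    | zero => simp
    | add _ _ _ _ h h' => simp only [add_lie, map_add, h, h']; abel
  let S' : LieDerivation ℂ L L := ⟨S, fun y z => by rw [h_der, ← lie_skew z]; abel⟩
  obtain ⟨s, hs⟩ := LieDerivation.IsKilling.exists_eq_ad S'
  have hs' : LieAlgebra.ad ℂ L s = S := by
    ext y
    rw [← LieDerivation.coe_ad_apply_eq_ad_apply, hs]
  refine ⟨s, hs' ▸ hS, hs' ▸ hN, fun y c hy => ?_⟩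
  rw [← LieAlgebra.ad_apply (R := ℂ), hs']
  exact aux (End.eigenspace_le_maxGenEigenspace (End.mem_eigenspace_iff.2 hy))

theorem mem_range_ad_of_forall_killingForm_eq_zero {e x : L}
    (h : ∀ z : L, ⁅e, z⁆ = 0 → killingForm ℂ L x z = 0) : ∃ y : L, ⁅e, y⁆ = x := by
  have hr := (LieModule.traceForm_isSymm ℂ L L).isRefl
  have hn := LieAlgebra.IsKilling.killingForm_nondegenerate ℂ L
  have := LinearMap.BilinForm.orthogonal_orthogonal (B := killingForm ℂ L) hn hr
    (LinearMap.range (LieAlgebra.ad ℂ L e))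
  change x ∈ LinearMap.range (LieAlgebra.ad ℂ L e)
  rw [← this, LinearMap.BilinForm.mem_orthogonal_iff]
  intro z hz
  rw [LinearMap.BilinForm.mem_orthogonal_iff] at hz
  refine (LieModule.traceForm_comm ℂ L L z x).trans (h z (hn.1 _ fun y => ?_))
  exact (LieModule.traceForm_apply_lie_apply' ℂ L L e z y).trans
    (neg_eq_zero.2 ((LieModule.traceForm_comm ℂ L L z _).trans (hz ⁅e, y⁆ ⟨y, rfl⟩)))

end Jordan


theorem exists_ad_pow_apply_eq_zero {h g y : L} {c μ : ℂ} (hc : c ≠ 0) (hg : ⁅h, g⁆ = c • g)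
    (hy : ⁅h, y⁆ = μ • y) : ∃ k : ℕ, ((LieAlgebra.ad ℂ L g) ^ k) y = 0 := by
  have hk : ∀ k : ℕ, ⁅h, ((LieAlgebra.ad ℂ L g) ^ k) y⁆ =
      (μ + k * c) • ((LieAlgebra.ad ℂ L g) ^ k) y := by
    intro k
    induction k with
    | zero => simpa using hy
    | succ k ih =>
      rw [pow_succ', End.mul_apply, LieAlgebra.ad_apply, leibniz_lie, hg, ih, lie_smul, smul_lie,
        ← add_smul]
      push_cast
      ring_nf
  by_contra! hne
  refine Set.infinite_of_injective_forall_mem (f := fun k : ℕ => μ + k * c) (fun a b hab => ?_)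
    (fun k => ?_) (End.finite_hasEigenvalue (LieAlgebra.ad ℂ L h))
  · simpa [hc] using hab
  · exact End.hasEigenvalue_of_hasEigenvector (x := ((LieAlgebra.ad ℂ L g) ^ k) y)
      ⟨End.mem_eigenspace_iff.2 (hk k), hne k⟩

section Sl2

variable {e h f : L}

theorem exists_nat_of_lie_eq_smul (ht : IsSl2Triple h e f) {x : L} (hx : x ≠ 0) {c : ℂ}
    (hhx : ⁅h, x⁆ = c • x) (hex : ⁅e, x⁆ = 0) : ∃ n : ℕ, c = n :=
  IsSl2Triple.HasPrimitiveVectorWith.exists_nat (t := ht) ⟨hx, hhx, hex⟩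

theorem exists_int_of_lie_eq_smul (ht : IsSl2Triple h e f) {x : L} (hx : x ≠ 0) {c : ℂ}
    (hhx : ⁅h, x⁆ = c • x) : ∃ n : ℤ, c = n := by
  obtain ⟨k, hk⟩ := exists_ad_pow_apply_eq_zero two_ne_zero (ht.lie_h_e_smul ℂ) hhx
  induction k generalizing x c with
  | zero => exact absurd hk hx
  | succ k ih =>
    by_cases hex : ⁅e, x⁆ = 0
    · obtain ⟨n, rfl⟩ := exists_nat_of_lie_eq_smul ht hx hhx hex
      exact ⟨n, by simp⟩
    · obtain ⟨n, hn⟩ := ih hex (c := c + 2)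
        (by rw [leibniz_lie, ht.lie_h_e_smul ℂ, hhx, lie_smul, smul_lie, ← add_smul, add_comm])
        (by rwa [pow_succ, End.mul_apply] at hk)
      exact ⟨n - 2, by push_cast; rw [← hn]; ring⟩

/-- An element killed by `e` and `h` is not in the image of `e` unless it vanishes. -/
theorem lie_e_ne_of_lie_h_eq_neg_two_smul (ht : IsSl2Triple h e f) {x y : L} (hx : x ≠ 0)
    (hhx : ⁅h, x⁆ = 0) (hex : ⁅e, x⁆ = 0) (hy : ⁅h, y⁆ = (-2 : ℂ) • y) : ⁅e, y⁆ ≠ x := by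
  intro hey
  have P : IsSl2Triple.HasPrimitiveVectorWith ht x (0 : ℂ) := ⟨hx, by simpa using hhx, hex⟩
  have hfx : ⁅f, x⁆ = 0 := by
    simpa using P.pow_toEnd_f_eq_zero_of_eq_nat (n := 0) (by simp)
  have hhf : ⁅h, f⁆ = (-2 : ℂ) • f := by rw [ht.lie_lie_smul_f ℂ, neg_smul]
  have hh : ∀ k : ℕ, ⁅h, ((LieAlgebra.ad ℂ L f) ^ k) y⁆ =
      (-2 - 2 * k : ℂ) • ((LieAlgebra.ad ℂ L f) ^ k) y := by
    intro k
    induction k with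
    | zero => simpa using hy
    | succ k ih =>
      rw [pow_succ', End.mul_apply, LieAlgebra.ad_apply, leibniz_lie, hhf, ih, lie_smul, smul_lie,
        ← add_smul]
      push_cast
      ring_nf
  have he : ∀ k : ℕ, ⁅e, ((LieAlgebra.ad ℂ L f) ^ (k + 1)) y⁆ =
      (-((k + 1) * (k + 2)) : ℂ) • ((LieAlgebra.ad ℂ L f) ^ k) y := by
    intro k
    induction k with
    | zero => simp [leibniz_lie e, ht.lie_e_f, hey, hfx, hy]
    | succ k ih =>
      rw [pow_succ', End.mul_apply, LieAlgebra.ad_apply, leibniz_lie, ht.lie_e_f, ih, lie_smul,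
        hh, show ⁅f, ((LieAlgebra.ad ℂ L f) ^ k) y⁆ = ((LieAlgebra.ad ℂ L f) ^ (k + 1)) y by
          rw [pow_succ', End.mul_apply, LieAlgebra.ad_apply], ← add_smul]
      push_cast
      ring_nf
  have hy0 : y ≠ 0 := by
    rintro rfl
    exact hx (by rw [← hey, lie_zero])
  obtain ⟨k, hk, hk'⟩ := Nat.exists_not_and_succ_of_not_zero_of_exists
    (p := fun k => ((LieAlgebra.ad ℂ L f) ^ k) y = 0) hy0
    (exists_ad_pow_apply_eq_zero (by norm_num) hhf hy)
  have := he k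
  rw [hk', lie_zero, eq_comm, smul_eq_zero_iff_left hk, neg_eq_zero, mul_eq_zero] at this
  norm_cast at this

omit [FiniteDimensional ℂ L] in
theorem exists_apply_eq_of_pow_apply_eq_zero (T : End ℂ L) {c : ℂ} (hc : c ≠ 0) (n : ℕ) {z : L}
    (hz : ((T - c • (1 : End ℂ L)) ^ n) z = 0) : ∃ w, T w = z := by
  induction n generalizing z with
  | zero => exact ⟨0, by simpa using hz.symm⟩
  | succ n ih =>
    obtain ⟨w, hw⟩ := ih (z := (T - c • (1 : End ℂ L)) z) (by rwa [pow_succ, End.mul_apply] at hz)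
    refine ⟨c⁻¹ • (z - w), ?_⟩
    rw [map_smul, map_sub, hw]
    simp [smul_smul, hc]

variable [LieAlgebra.IsKilling ℂ L]

theorem killingForm_eq_zero_of_isDistinguished (hdist : IsDistinguished L e) {x z : L}
    (hx : x ∈ LieSubalgebra.engel ℂ h) (hex : ⁅x, e⁆ = 0)
    (hz : z ∈ LieSubalgebra.engel ℂ h) (hez : ⁅z, e⁆ = 0) : killingForm ℂ L x z = 0 := by
  let C : LieSubalgebra ℂ L := LieSubalgebra.engel ℂ h ⊓ centralizer L e
  have hC : LieModule.IsNilpotent C L := by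
    rw [LieModule.isNilpotent_iff_forall' (R := ℂ)]
    rintro ⟨w, -, hw⟩
    obtain ⟨s, hss, hsn, hs⟩ := exists_ad_isSemisimple_isNilpotent_sub w
    have : s = 0 := hdist s (by simpa using hs e 0 (by simpa using show ⁅w, e⁆ = 0 from hw)) hss
    rw [this, map_zero, sub_zero] at hsn
    exact hsn
  have := LieModule.traceForm_eq_zero_of_isNilpotent ℂ C L
  exact LinearMap.congr_fun (LinearMap.congr_fun this ⟨x, hx, hex⟩) ⟨z, hz, hez⟩

theorem eq_zero_of_lie_e_eq_zero_of_lie_h_eq_zero (ht : IsSl2Triple h e f)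
    (hdist : IsDistinguished L e) {x : L} (hhx : ⁅h, x⁆ = 0) (hex : ⁅e, x⁆ = 0) : x = 0 := by
  by_contra hx
  have hcomm : ∀ z : L, ⁅e, z⁆ = 0 → ⁅e, ⁅h, z⁆⁆ = 0 := by
    intro z hz
    rw [leibniz_lie, hz, lie_zero, add_zero, ← lie_skew e h, ht.lie_h_e_smul ℂ, neg_lie, smul_lie,
      hz, smul_zero, neg_zero]
  have hxh : x ∈ LieSubalgebra.engel ℂ h :=
    (LieSubalgebra.mem_engel_iff ℂ h x).2 ⟨1, by simpa using hhx⟩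
  have horth : ∀ z : L, ⁅e, z⁆ = 0 → killingForm ℂ L x z = 0 := by
    intro z hz
    have hker := Submodule.eq_iSup_inf_genEigenspace (f := LieAlgebra.ad ℂ L h)
      (p := LinearMap.ker (LieAlgebra.ad ℂ L e)) ⊤ (fun z hz => hcomm z hz)
      (End.iSup_maxGenEigenspace_eq_top _)
    suffices LinearMap.ker (LieAlgebra.ad ℂ L e) ≤ LinearMap.ker (killingForm ℂ L x) from this hz
    rw [hker]
    refine iSup_le fun μ z ⟨hez, hz⟩ => ?_
    change killingForm ℂ L x z = 0
    have hez : ⁅e, z⁆ = 0 := hez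
    obtain ⟨n, hn⟩ := (End.mem_maxGenEigenspace _ _ _).1 hz
    by_cases hμ : μ = 0
    · subst hμ
      exact killingForm_eq_zero_of_isDistinguished hdist hxh (by rw [← lie_skew, hex, neg_zero])
        ((LieSubalgebra.mem_engel_iff ℂ h z).2 ⟨n, by simpa using hn⟩)
        (by rw [← lie_skew, hez, neg_zero])
    · obtain ⟨w, rfl⟩ := exists_apply_eq_of_pow_apply_eq_zero _ hμ n hn
      refine (LieModule.traceForm_apply_lie_apply ℂ L L x h w).symm.trans ?_
      rw [← lie_skew, hhx]
      simp
  obtain ⟨y, hy⟩ := mem_range_ad_of_forall_killingForm_eq_zero horth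
  let T : End ℂ L := LieAlgebra.ad ℂ L h + (2 : ℂ) • 1
  have hT : ∀ z, T z = ⁅h, z⁆ + (2 : ℂ) • z := fun z => rfl
  have hTker : ∀ z ∈ LinearMap.ker (LieAlgebra.ad ℂ L e),
      T z ∈ LinearMap.ker (LieAlgebra.ad ℂ L e) := by
    intro z hz
    exact add_mem (hcomm z hz) (Submodule.smul_mem _ _ hz)
  have hinj : Function.Injective (T.restrict hTker) := by
    rw [injective_iff_map_eq_zero]
    rintro ⟨z, hz⟩ h0
    by_contra hne
    obtain ⟨n, hn⟩ := exists_nat_of_lie_eq_smul ht (x := z) (c := -2) (by simpa using hne)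
      (by
        have := congrArg Subtype.val h0
        rw [neg_smul]
        exact eq_neg_of_add_eq_zero_left this) hz
    have : ((n + 2 : ℕ) : ℂ) = 0 := by push_cast; rw [← hn]; ring
    norm_cast at this
  obtain ⟨⟨w, hw⟩, hwy⟩ := LinearMap.surjective_of_injective hinj ⟨T y, by
    rw [LinearMap.mem_ker, LieAlgebra.ad_apply, hT, lie_add, lie_smul, leibniz_lie, hy, hhx,
      ← lie_skew e h, ht.lie_h_e_smul ℂ, neg_lie, smul_lie, hy]
    simp⟩
  refine lie_e_ne_of_lie_h_eq_neg_two_smul ht hx hhx hex (y := y - w) ?_ ?_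
  · have : T w = T y := congrArg Subtype.val hwy
    rw [neg_smul]
    refine eq_neg_of_add_eq_zero_left ?_
    rw [← hT, map_sub, this, sub_self]
  · rw [lie_sub, hy, show ⁅e, w⁆ = 0 from hw, sub_zero]

theorem ad_h_isSemisimple (ht : IsSl2Triple h e f) (hdist : IsDistinguished L e) :
    (LieAlgebra.ad ℂ L h).IsSemisimple := by
  obtain ⟨s, hss, -, hs⟩ := exists_ad_isSemisimple_isNilpotent_sub h
  have h1 := hs e 2 (ht.lie_h_e_smul ℂ)
  have h2 := hs h 0 (by simp)
  have : h - s = 0 := by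
    refine eq_zero_of_lie_e_eq_zero_of_lie_h_eq_zero ht hdist ?_ ?_
    · rw [lie_sub, lie_self, ← lie_skew, h2]
      simp
    · rw [← lie_skew, sub_lie, h1, ht.lie_h_e_smul ℂ, sub_self, neg_zero]
  rwa [sub_eq_zero.1 this]

theorem lie_h_eq_zero_of_mem_engel (ht : IsSl2Triple h e f) (hdist : IsDistinguished L e) :
    ∀ y ∈ LieSubalgebra.engel ℂ h, ⁅h, y⁆ = 0 := by
  intro y hy
  have hy' : y ∈ (LieAlgebra.ad ℂ L h).maxGenEigenspace 0 := by
    rw [End.mem_maxGenEigenspace]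
    simpa [LieSubalgebra.mem_engel_iff] using hy
  rw [(ad_h_isSemisimple ht hdist).isFinitelySemisimple.maxGenEigenspace_eq_eigenspace,
    End.mem_eigenspace_iff, zero_smul] at hy'
  exact hy'

/-- For distinguished `e`, bracketing with `e` is an isomorphism from degree `0` to degree `2`. -/
theorem finrank_eigenspace_zero_eq_two_and_surjective (ht : IsSl2Triple h e f)
    (hdist : IsDistinguished L e) :
    finrank ℂ ((LieAlgebra.ad ℂ L h).eigenspace 0) =
      finrank ℂ ((LieAlgebra.ad ℂ L h).eigenspace 2) ∧
    ∀ w : L, ⁅h, w⁆ = (2 : ℂ) • w → ∃ u : L, ⁅h, u⁆ = 0 ∧ ⁅u, e⁆ = w := by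
  have h02 : ∀ u ∈ (LieAlgebra.ad ℂ L h).eigenspace 0,
      LieAlgebra.ad ℂ L e u ∈ (LieAlgebra.ad ℂ L h).eigenspace 2 := by
    intro u hu
    rw [End.mem_eigenspace_iff, LieAlgebra.ad_apply] at hu ⊢
    rw [LieAlgebra.ad_apply, leibniz_lie, hu, ht.lie_h_e_smul ℂ, smul_lie, zero_smul, lie_zero,
      add_zero]
  have h20 : ∀ u ∈ (LieAlgebra.ad ℂ L h).eigenspace 2,
      LieAlgebra.ad ℂ L f u ∈ (LieAlgebra.ad ℂ L h).eigenspace 0 := by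
    intro u hu
    rw [End.mem_eigenspace_iff, LieAlgebra.ad_apply] at hu ⊢
    rw [LieAlgebra.ad_apply, leibniz_lie, hu, ht.lie_lie_smul_f ℂ, neg_lie, smul_lie, lie_smul,
      zero_smul, neg_add_cancel]
  have hinj : Function.Injective ((LieAlgebra.ad ℂ L e).restrict h02) := by
    rw [injective_iff_map_eq_zero]
    rintro ⟨u, hu⟩ h0
    rw [End.mem_eigenspace_iff, zero_smul] at hu
    exact Subtype.ext (eq_zero_of_lie_e_eq_zero_of_lie_h_eq_zero ht hdist hu
      (congrArg Subtype.val h0))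
  have hinj' : Function.Injective ((LieAlgebra.ad ℂ L f).restrict h20) := by
    rw [injective_iff_map_eq_zero]
    rintro ⟨u, hu⟩ h0
    rw [End.mem_eigenspace_iff, LieAlgebra.ad_apply] at hu
    by_contra hne
    obtain ⟨n, hn⟩ := exists_nat_of_lie_eq_smul ht.symm (x := u) (c := -2) (by simpa using hne)
      (by rw [neg_lie, hu, neg_smul]) (congrArg Subtype.val h0)
    have : ((n + 2 : ℕ) : ℂ) = 0 := by push_cast; rw [← hn]; ring
    norm_cast at this
  have hdim := le_antisymm (LinearMap.finrank_le_finrank_of_injective hinj)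
    (LinearMap.finrank_le_finrank_of_injective hinj')
  refine ⟨hdim, fun w hw => ?_⟩
  obtain ⟨⟨u, hu⟩, huw⟩ := (LinearMap.injective_iff_surjective_of_finrank_eq_finrank hdim).1 hinj
    ⟨w, End.mem_eigenspace_iff.2 hw⟩
  rw [End.mem_eigenspace_iff, zero_smul] at hu
  refine ⟨-u, by rw [lie_neg, ← LieAlgebra.ad_apply ℂ, hu, neg_zero], ?_⟩
  rw [neg_lie, lie_skew]
  exact congrArg Subtype.val huw

end Sl2

end Distinguished

/-! ### Integer combinations given by association lists

The functions below are evaluated by the kernel, so they use recursors and the primitive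
operations on numbers directly. -/

noncomputable section

namespace F4

/-- Integer linear combinations of vectors indexed by `ℕ`, as association lists. -/
abbrev Comb := List (ℕ × ℤ)

/-- The value of a combination in an additive group. -/
def ev {M : Type*} [AddCommGroup M] (x : ℕ → M) (s : Comb) : M :=
  (s.map fun p => p.2 • x p.1).sum

/-- `if c then a else b`. -/
def sel {α : Type} (c : Bool) (a b : α) : α := Bool.rec (motive := fun _ => α) b a c

/-- `List.foldr`. -/
def fold {α β : Type} (f : α → β → β) (z : β) (l : List α) : β :=
  List.rec (motive := fun _ => β) z (fun a _ r => f a r) l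

/-- `List.all`. -/
def all {α : Type} (f : α → Bool) (l : List α) : Bool := fold (fun a r => sel (f a) r false) true l

/-- Decide whether an integer vanishes. -/
def isZero (c : ℤ) : Bool :=
  Int.rec (motive := fun _ => Bool) (fun n => Nat.beq n 0) (fun _ => false) c

/-- Add a single term to a combination, collecting it with an existing one. -/
def add1 (k : ℕ) (c : ℤ) (s : Comb) : Comb :=
  List.rec (motive := fun _ => Comb) (sel (isZero c) [] [(k, c)])
    (fun p s r => sel (Nat.beq k p.1)
      (sel (isZero (Int.add c p.2)) s ((k, Int.add c p.2) :: s)) (p :: r)) s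

/-- Collect equal terms and remove zero terms. -/
def collect (s : Comb) : Comb := fold (fun p r => add1 p.1 p.2 r) [] s

/-- `a * s + r`. -/
def scaleOnto (a : ℤ) (s r : Comb) : Comb := fold (fun p r => (p.1, Int.mul a p.2) :: r) r s

/-- Substitute combinations for the basis vectors of a combination. -/
def subst (T : ℕ → Comb) (s : Comb) : Comb := fold (fun p r => scaleOnto p.2 (T p.1) r) [] s

/-- Extend a product of basis vectors to combinations. -/
def bilin (T : ℕ → ℕ → Comb) (s t : Comb) : Comb := subst (fun i => subst (T i) t) s

/-- The coefficient of a basis vector. -/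
def coeff (s : Comb) (k : ℕ) : ℤ := fold (fun p r => sel (Nat.beq p.1 k) (Int.add p.2 r) r) 0 s

/-- `List.getD`. -/
def nth {α : Type} (d : α) (l : List α) (n : ℕ) : α :=
  List.rec (motive := fun _ => ℕ → α) (fun _ => d)
    (fun a _ r n => sel (Nat.beq n 0) a (r (Nat.pred n))) l n

section evaluation

@[simp] lemma sel_true {α : Type} (a b : α) : sel true a b = a := rfl

@[simp] lemma sel_false {α : Type} (a b : α) : sel false a b = b := rfl

@[simp] lemma sel_decide {α : Type} (p : Prop) [Decidable p] (a b : α) :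
    sel (decide p) a b = if p then a else b := by
  by_cases h : p <;> simp [h]

@[simp] lemma fold_nil {α β : Type} (f : α → β → β) (z : β) : fold f z [] = z := rfl

@[simp] lemma fold_cons {α β : Type} (f : α → β → β) (z : β) (a : α) (l : List α) :
    fold f z (a :: l) = f a (fold f z l) := rfl

lemma nat_beq (m n : ℕ) : Nat.beq m n = decide (m = n) := by
  rw [Bool.eq_iff_iff, Nat.beq_eq, decide_eq_true_eq]

lemma isZero_eq (c : ℤ) : isZero c = decide (c = 0) := by
  cases c with
  | ofNat n => simp [isZero, nat_beq]
  | negSucc n => simp [isZero]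

lemma all_eq_true {α : Type} {f : α → Bool} {l : List α} (h : all f l = true) :
    ∀ a ∈ l, f a = true := by
  induction l with
  | nil => simp
  | cons a l ih =>
    rw [all, fold_cons] at h
    cases ha : f a with
    | false => rw [ha] at h; exact absurd h (by simp)
    | true =>
      rw [ha] at h
      simpa [ha] using ih h

lemma nth_eq {α : Type} (d : α) (l : List α) (n : ℕ) : nth d l n = l.getD n d := by
  induction l generalizing n with
  | nil => rfl
  | cons a l ih =>
    cases n with
    | zero => rfl
    | succ n => exact (ih n).trans (by simp)

end evaluation

section ev

variable {M N : Type*} [AddCommGroup M] [AddCommGroup N] (x : ℕ → M)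

@[simp] lemma ev_nil : ev x [] = 0 := rfl

@[simp] lemma ev_cons (p : ℕ × ℤ) (s : Comb) : ev x (p :: s) = p.2 • x p.1 + ev x s := by
  simp [ev]

lemma ev_add1 (k : ℕ) (c : ℤ) (s : Comb) : ev x (add1 k c s) = c • x k + ev x s := by
  induction s with
  | nil =>
    change ev x (sel (isZero c) [] [(k, c)]) = _
    rw [isZero_eq, sel_decide]
    by_cases hc : c = 0 <;> simp [hc]
  | cons p s ih =>
    obtain ⟨l, d⟩ := p
    change ev x (sel (Nat.beq k l) (sel (isZero (c + d)) s ((k, c + d) :: s))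
      ((l, d) :: add1 k c s)) = _
    rw [isZero_eq, sel_decide, nat_beq, sel_decide]
    by_cases hk : k = l
    · subst hk
      by_cases hc : c + d = 0
      · have : c • x k + (d • x k + ev x s) = ev x s := by
          rw [← add_assoc, ← add_zsmul, hc, zero_zsmul, zero_add]
        simp [hc, this]
      · simp [hc, add_zsmul, add_assoc]
    · simp only [if_neg hk, ev_cons, ih]
      abel

@[simp] lemma ev_collect (s : Comb) : ev x (collect s) = ev x s := by
  induction s with
  | nil => rfl
  | cons p s ih =>
    change ev x (add1 p.1 p.2 (collect s)) = _
    rw [ev_add1, ih, ev_cons]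

@[simp] lemma ev_scaleOnto (a : ℤ) (s r : Comb) :
    ev x (scaleOnto a s r) = a • ev x s + ev x r := by
  induction s with
  | nil => simp [scaleOnto]
  | cons p s ih =>
    change ev x ((p.1, a * p.2) :: scaleOnto a s r) = _
    rw [ev_cons, ih, ev_cons, smul_add, add_assoc, mul_smul]

@[simp] lemma ev_subst (T : ℕ → Comb) (s : Comb) :
    ev x (subst T s) = ev (fun k => ev x (T k)) s := by
  induction s with
  | nil => rfl
  | cons p s ih =>
    change ev x (scaleOnto p.2 (T p.1) (subst T s)) = _
    rw [ev_scaleOnto, ih, ev_cons]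

lemma map_ev (φ : M →+ N) (s : Comb) : φ (ev x s) = ev (fun k => φ (x k)) s := by
  induction s with
  | nil => simp
  | cons p s ih => simp [ih]

lemma ev_intCast_coeff (s : Comb) (k : ℕ) :
    ev (fun j => if j = k then (1 : ℤ) else 0) s = coeff s k := by
  induction s with
  | nil => rfl
  | cons p s ih =>
    change _ = sel (Nat.beq p.1 k) (p.2 + coeff s k) (coeff s k)
    rw [ev_cons, ih, nat_beq, sel_decide]
    split_ifs <;> simp

lemma ev_mem {R : Type*} [Ring R] {M : Type*} [AddCommGroup M] [Module R M] {x : ℕ → M}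
    {S : Submodule R M} (hx : ∀ k, x k ∈ S) (s : Comb) : ev x s ∈ S := by
  induction s with
  | nil => simp
  | cons p s ih =>
    rw [ev_cons]
    exact S.add_mem (S.toAddSubgroup.zsmul_mem (hx _) _) ih

lemma lie_ev {L : Type*} [LieRing L] (x : ℕ → L) (y : L) (s : Comb) :
    ⁅y, ev x s⁆ = ev (fun k => ⁅y, x k⁆) s := by
  induction s with
  | nil => simp
  | cons p s ih => simp [ih]

lemma ev_lie {L : Type*} [LieRing L] (x : ℕ → L) (y : L) (s : Comb) :
    ⁅ev x s, y⁆ = ev (fun k => ⁅x k, y⁆) s := by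
  induction s with
  | nil => simp
  | cons p s ih => simp [ih]

/-- A bracket given on basis vectors is given by `bilin` on combinations. -/
lemma lie_ev_ev {L : Type*} [LieRing L] {x : ℕ → L} {T : ℕ → ℕ → Comb}
    (hT : ∀ i j, ⁅x i, x j⁆ = ev x (T i j)) (s t : Comb) :
    ⁅ev x s, ev x t⁆ = ev x (bilin T s t) := by
  rw [ev_lie, bilin, ev_subst]
  congr 1
  funext k
  rw [lie_ev, ev_subst]
  congr 1
  funext j
  exact hT k j

end ev

/-! ### The 27-dimensional representation -/

/-- The matrix unit with row `n / 27` and column `n % 27`. -/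
def unit (n : ℕ) : Module.End ℂ (ℕ →₀ ℂ) :=
  Finsupp.lsingle (n / 27) ∘ₗ Finsupp.lapply (n % 27)

lemma unit_mul (m n : ℕ) : unit m * unit n =
    if m % 27 = n / 27 then unit (27 * (m / 27) + n % 27) else 0 := by
  have h1 : (27 * (m / 27) + n % 27) / 27 = m / 27 := by omega
  have h2 : (27 * (m / 27) + n % 27) % 27 = n % 27 := by omega
  split_ifs with h
  · refine LinearMap.ext fun v => ?_
    simp [unit, h1, h2, h]
  · refine LinearMap.ext fun v => ?_
    simp [unit, Ne.symm h]

/-- `a * (s * t) + r` for matrices. -/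
def mulOnto (a : ℤ) (s t r : Comb) : Comb :=
  fold (fun p r => fold (fun q r => sel (Nat.beq (Nat.mod p.1 27) (Nat.div q.1 27))
    ((Nat.add (Nat.mul 27 (Nat.div p.1 27)) (Nat.mod q.1 27), Int.mul a (Int.mul p.2 q.2)) :: r)
    r) r t) r s

/-- The commutator of two matrices. -/
def comm (s t : Comb) : Comb := mulOnto 1 s t (mulOnto (-1) t s [])

lemma ev_mulOnto (a : ℤ) (s t r : Comb) :
    ev unit (mulOnto a s t r) = a • (ev unit s * ev unit t) + ev unit r := by
  have key (p : ℕ × ℤ) (t r' : Comb) : ev unit (fold (fun q r => sel (Nat.beq (Nat.mod p.1 27)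
      (Nat.div q.1 27)) ((Nat.add (Nat.mul 27 (Nat.div p.1 27)) (Nat.mod q.1 27),
      Int.mul a (Int.mul p.2 q.2)) :: r) r) r' t) =
      a • (p.2 • unit p.1 * ev unit t) + ev unit r' := by
    induction t with
    | nil => simp
    | cons q t iht =>
      rw [fold_cons, nat_beq, sel_decide]
      change ev unit (if p.1 % 27 = q.1 / 27 then
        (27 * (p.1 / 27) + q.1 % 27, a * (p.2 * q.2)) :: _ else _) = _
      rw [ev_cons, mul_add, mul_smul_comm, smul_mul_assoc, unit_mul, smul_add, add_assoc,
        ← iht]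
      split_ifs
      · rw [ev_cons, mul_comm p.2, mul_smul, mul_smul]
      · simp
  induction s with
  | nil => simp [mulOnto]
  | cons p s ih =>
    change ev unit (fold _ (mulOnto a s t r) t) = _
    rw [key, ih, ev_cons, add_mul, smul_add, add_assoc]

lemma ev_comm (s t : Comb) : ev unit (comm s t) = ⁅ev unit s, ev unit t⁆ := by
  rw [comm, ev_mulOnto, ev_mulOnto, Ring.lie_def, ev_nil, add_zero, one_smul, neg_one_zsmul,
    sub_eq_add_neg]

/-- The matrices of the simple coroots and of the positive root vectors. -/
def posMat : List Comb :=
    [[(0, 1), (28, -1), (140, 1), (168, 1), (196, -1), (224, 1), (252, -1), (280, 2), (308, -1),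
    (420, -2), (448, 1), (476, -1), (504, 1), (532, -1), (560, 1), (588, -1), (700, 1), (728,
    -1)],
     [(28, 1), (56, -1), (84, 1), (112, 1), (140, -1), (168, -1), (224, 1), (280, -1), (308, 2),
    (420, 1), (448, -2), (476, -1), (532, 1), (588, 1), (616, -1), (644, -1), (672, 1), (700,
    -1)],
     [(56, 1), (84, -1), (168, 1), (224, -1), (252, 1), (308, -1), (448, 1), (476, 1), (504, -1),
    (532, -1), (644, 1), (672, -1)],
     [(84, 1), (112, -1), (140, 1), (168, -1), (196, 1), (252, -1), (504, 1), (532, 1), (560, -1),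
    (588, -1), (616, 1), (644, -1)],
     [(1, 1), (142, 1), (171, 1), (227, 1), (282, 1), (283, 1), (339, 1), (366, 1), (449, 1),
    (505, 1), (561, 1), (701, 1)],
     [(29, 1), (86, 1), (114, 1), (226, 1), (310, 1), (311, 1), (367, 1), (394, 1), (422, 1),
    (535, 1), (590, 1), (673, 1)],
     [(57, 1), (170, 1), (254, 1), (450, 1), (478, 1), (645, 1)],
     [(85, 1), (141, 1), (198, 1), (506, 1), (534, 1), (617, 1)],
     [(2, -1), (88, 1), (117, 1), (228, 1), (230, -1), (286, -1), (312, 1), (341, -1), (395, 1),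
    (508, -1), (563, -1), (674, 1)],
     [(30, -1), (59, 1), (116, -1), (172, 1), (256, 1), (257, 1), (369, -1), (396, -1), (424, -1),
    (481, 1), (591, -1), (646, 1)],
     [(58, -1), (143, 1), (200, 1), (452, -1), (480, -1), (618, 1)],
     [(3, 1), (61, 1), (119, -1), (174, 1), (176, -1), (258, 1), (288, 1), (343, 1), (397, -1),
    (454, -1), (564, 1), (647, 1)],
     [(32, 1), (118, 1), (259, -1), (315, -1), (427, 1), (592, 1)],
     [(31, 1), (60, -1), (89, -1), (145, 1), (202, 1), (203, 1), (371, 1), (398, 1), (426, 1),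
    (482, -1), (537, -1), (619, 1)],
     [(5, -1), (34, 1), (120, 1), (121, 1), (178, 1), (234, 1), (260, -1), (316, -1), (346, -1),
    (373, -1), (565, -1), (593, 1)],
     [(4, -1), (63, -1), (92, -1), (147, 1), (149, -1), (204, 1), (290, -1), (345, -1), (399, 1),
    (455, 1), (510, 1), (620, 1)],
     [(33, -1), (91, 1), (205, -1), (317, 1), (428, -1), (538, 1)],
     [(7, 1), (123, -1), (179, -1), (235, -1), (292, -1), (566, 1)],
     [(6, 1), (36, -1), (93, 1), (94, 1), (151, 1), (206, -1), (236, -1), (318, 1), (347, 1),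
    (374, 1), (511, -1), (539, 1)],
     [(35, 1), (64, 1), (207, 1), (263, 1), (429, 1), (484, 1)],
     [(9, -1), (96, -1), (152, -1), (237, 1), (293, 1), (512, 1)],
     [(8, -1), (38, 1), (66, 1), (67, 1), (153, -1), (182, -1), (208, 1), (264, 1), (348, -1),
    (375, -1), (457, -1), (485, 1)],
     [(11, 1), (69, -1), (154, 1), (183, 1), (294, -1), (458, 1)],
     [(10, 1), (39, 1), (41, -1), (70, -1), (99, -1), (128, -1), (211, -1), (266, -1), (321, -1),
    (349, 1), (403, -1), (431, 1)],
     [(13, -1), (14, -1), (42, -1), (71, 1), (100, 1), (129, 1), (157, -1), (185, -1), (240, -1),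
    (295, 1), (377, 1), (404, 1)],
     [(16, 1), (44, 1), (103, -1), (131, -1), (241, 1), (323, 1)],
     [(18, -1), (46, -1), (76, -1), (132, 1), (187, 1), (269, 1)],
     [(20, 1), (48, 1), (77, 1), (105, 1), (160, 1), (215, 1)]]

/-- The matrices of a Chevalley basis: coroots, positive root vectors, negative root vectors. -/
def mat (i : ℕ) : Comb :=
  sel (Nat.blt i 28) (nth [] posMat i)
    (fold (fun p r => (Nat.add (Nat.mul 27 (Nat.mod p.1 27)) (Nat.div p.1 27), p.2) :: r) []
      (nth [] posMat (Nat.sub i 24)))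

/-- Matrix entries determining the coordinates of a matrix in the basis `mat`: a term `(q, k, c)`
in the row `p` means that the entry at `(p, q)` contributes `c` times its value to the
coordinate `k`. -/
def pivots : List (List (ℕ × ℕ × ℤ)) :=
  [[(0, 0, 1), (0, 1, 1), (0, 2, 1), (0, 3, 1), (1, 4, 1), (2, 8, -1), (3, 11, 1), (4, 15, -1),
    (5, 14, -1), (6, 18, 1), (7, 17, 1), (8, 21, -1), (9, 20, -1), (10, 23, 1), (11, 22, 1), (13,
    24, -1), (16, 25, 1), (18, 26, -1), (20, 27, 1)], [(0, 28, 1), (1, 1, 1), (1, 2, 1), (2, 5,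
    1), (3, 9, -1), (4, 13, 1), (5, 12, 1), (6, 16, -1), (8, 19, 1)], [(0, 32, -1), (1, 29, 1),
    (2, 2, 1), (3, 6, 1), (4, 10, -1)], [(0, 35, 1), (1, 33, -1), (2, 30, 1), (4, 7, 1)], [(0, 39,
    -1), (1, 37, 1), (2, 34, -1), (3, 31, 1)], [(0, 38, -1), (1, 36, 1)], [(0, 42, 1), (1, 40,
    -1)], [(0, 41, 1), (7, 3, 1)], [(0, 45, -1), (1, 43, 1)], [(0, 44, -1)], [(0, 47, 1)], [(0,
    46, 1)], [], [(0, 48, -1)], [], [], [(0, 49, 1)], [], [(0, 50, -1)], [], [(0, 51, 1)], [], [],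
    [], [], [], []]

/-- The contribution of a matrix unit to the coordinates. -/
def pivot (n : ℕ) : Comb :=
  fold (fun p r => sel (Nat.beq p.1 (Nat.mod n 27)) (p.2 :: r) r) [] (nth [] pivots (Nat.div n 27))

/-- The coordinates of the commutator of two matrices. -/
def coords (s t : Comb) : Comb := collect (subst pivot (collect (comm s t)))

/-- The structure constants. -/
def T (i j : ℕ) : Comb := coords (mat i) (mat j)

attribute [irreducible] collect comm mat pivot coords T

end F4

end

noncomputable section

namespace F4

section Serre

variable {B : Type*} [DecidableEq B] {A : Type*} [LieRing A] [LieAlgebra ℂ A]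

/-- The projection of the free Lie algebra onto the Lie algebra of a Cartan matrix. -/
def serreMk (CM : Matrix B B ℤ) :
    FreeLieAlgebra ℂ (CartanMatrix.Generators B) →ₗ⁅ℂ⁆ Matrix.ToLieAlgebra ℂ CM where
  toFun x := (LieSubmodule.Quotient.mk x :
    FreeLieAlgebra ℂ _ ⧸ CartanMatrix.Relations.toIdeal ℂ CM)
  map_add' _ _ := rfl
  map_smul' _ _ := rfl
  map_lie' := rfl

lemma serreMk_surjective (CM : Matrix B B ℤ) : Function.Surjective (serreMk CM) :=
  Quot.mk_surjective

lemma exists_serre_lift (CM : Matrix B B ℤ)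
    (φ : FreeLieAlgebra ℂ (CartanMatrix.Generators B) →ₗ⁅ℂ⁆ A)
    (hφ : ∀ x ∈ CartanMatrix.Relations.toSet ℂ CM, φ x = 0) :
    ∃ ρ : Matrix.ToLieAlgebra ℂ CM →ₗ⁅ℂ⁆ A, ∀ x, ρ (serreMk CM x) = φ x := by
  have hle : CartanMatrix.Relations.toIdeal ℂ CM ≤ φ.ker := by
    rw [CartanMatrix.Relations.toIdeal, LieSubmodule.lieSpan_le]
    exact fun x hx => (LieHom.mem_ker).2 (hφ x hx)
  let ρ : Matrix.ToLieAlgebra ℂ CM →ₗ[ℂ] A :=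
    (CartanMatrix.Relations.toIdeal ℂ CM).toSubmodule.liftQ (φ : _ →ₗ[ℂ] A)
      (fun x hx => LinearMap.mem_ker.2 ((LieHom.mem_ker).1 (hle hx)))
  have hρ (x) : ρ (serreMk CM x) = φ x := rfl
  refine ⟨{ ρ with map_lie' := ?_ }, hρ⟩
  intro x y
  obtain ⟨x, rfl⟩ := serreMk_surjective CM x
  obtain ⟨y, rfl⟩ := serreMk_surjective CM y
  change ρ ⁅serreMk CM x, serreMk CM y⁆ = ⁅ρ (serreMk CM x), ρ (serreMk CM y)⁆
  rw [← LieHom.map_lie, hρ, hρ, hρ, LieHom.map_lie]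

lemma eq_top_of_serre_generators_mem (CM : Matrix B B ℤ)
    (N : LieSubalgebra ℂ (Matrix.ToLieAlgebra ℂ CM))
    (hN : ∀ s, serreMk CM (FreeLieAlgebra.of ℂ s) ∈ N) : N = ⊤ := by
  have h : N.incl.comp (FreeLieAlgebra.lift ℂ fun s => (⟨_, hN s⟩ : N)) = serreMk CM := by
    refine FreeLieAlgebra.hom_ext fun s => ?_
    simp [FreeLieAlgebra.lift_of_apply]
  refine eq_top_iff.2 fun y _ => ?_
  obtain ⟨y, rfl⟩ := serreMk_surjective CM y
  rw [← h]
  exact Subtype.prop _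

end Serre

section Rep

attribute [local instance] LieRing.ofAssociativeRing LieAlgebra.ofAssociativeAlgebra

/-- The position of a Chevalley generator among the matrices `mat`. -/
def genIdx : CartanMatrix.Generators (Fin 4) → ℕ
  | .H i => i
  | .E i => 4 + i
  | .F i => 28 + i

/-- Vanishing of a combination. -/
def null (s : Comb) : Bool :=
  List.rec (motive := fun _ => Bool) true (fun _ _ _ => false) (collect s)

lemma ev_eq_zero_of_null {M : Type*} [AddCommGroup M] (x : ℕ → M) {s : Comb} (h : null s = true) :
    ev x s = 0 := by
  rw [← ev_collect]
  unfold null at h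
  cases hs : collect s with
  | nil => rfl
  | cons p s => rw [hs] at h; exact absurd h (by simp)

/-- The iterated commutator `(ad s) ^ n t`. -/
def commPow (s : Comb) (n : ℕ) (t : Comb) : Comb :=
  Nat.rec (motive := fun _ => Comb) t (fun _ r => comm s r) n

lemma ev_commPow (s t : Comb) (n : ℕ) :
    ev unit (commPow s n t) = ((LieAlgebra.ad ℂ _ (ev unit s)) ^ n) (ev unit t) := by
  induction n with
  | zero => rfl
  | succ n ih =>
    change ev unit (comm s (commPow s n t)) = _
    rw [ev_comm, ih, pow_succ', Module.End.mul_apply, LieAlgebra.ad_apply]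

set_option maxRecDepth 100000 in
lemma serre_relations : ∀ i j : Fin 4,
    null (comm (mat i) (mat j)) = true ∧
    null (if i = j then scaleOnto (-1) (mat i) (comm (mat (4 + i)) (mat (28 + i)))
      else comm (mat (4 + i)) (mat (28 + j))) = true ∧
    null (scaleOnto (-CartanMatrix.F₄ i j) (mat (4 + j)) (comm (mat i) (mat (4 + j)))) = true ∧
    null (scaleOnto (CartanMatrix.F₄ i j) (mat (28 + j)) (comm (mat i) (mat (28 + j)))) = true ∧
    null (commPow (mat (4 + i)) (-CartanMatrix.F₄ i j).toNat
      (comm (mat (4 + i)) (mat (4 + j)))) = true ∧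
    null (commPow (mat (28 + i)) (-CartanMatrix.F₄ i j).toNat
      (comm (mat (28 + i)) (mat (28 + j)))) = true := by
  decide +kernel

open CartanMatrix in
lemma exists_rep : ∃ ρ : LieAlgebra.f₄ ℂ →ₗ⁅ℂ⁆ Module.End ℂ (ℕ →₀ ℂ),
    ∀ s, ρ (serreMk F₄ (FreeLieAlgebra.of ℂ s)) = ev unit (mat (genIdx s)) := by
  set φ := FreeLieAlgebra.lift ℂ fun s => ev unit (mat (genIdx s))
  have hof (s) : φ (FreeLieAlgebra.of ℂ s) = ev unit (mat (genIdx s)) :=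
    FreeLieAlgebra.lift_of_apply _ s
  suffices hφ : ∀ x ∈ Relations.toSet ℂ F₄, φ x = 0 by
    obtain ⟨ρ, hρ⟩ := exists_serre_lift F₄ φ hφ
    exact ⟨ρ, fun s => by rw [hρ, hof]⟩
  have hH (i) : φ (FreeLieAlgebra.of ℂ (.H i)) = ev unit (mat i) := hof _
  have hE (i) : φ (FreeLieAlgebra.of ℂ (.E i)) = ev unit (mat (4 + i)) := hof _
  have hF (i) : φ (FreeLieAlgebra.of ℂ (.F i)) = ev unit (mat (28 + i)) := hof _
  have had (x) (n : ℕ) (y) : φ (((LieAlgebra.ad ℂ _ x) ^ n) y) =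
      ((LieAlgebra.ad ℂ _ (φ x)) ^ n) (φ y) := by
    induction n with
    | zero => rfl
    | succ n ih =>
      rw [pow_succ', pow_succ', Module.End.mul_apply, Module.End.mul_apply, LieAlgebra.ad_apply,
        LieHom.map_lie, ih, LieAlgebra.ad_apply]
  rintro x (((((⟨⟨i, j⟩, rfl⟩ | ⟨⟨i, j⟩, rfl⟩) | ⟨⟨i, j⟩, rfl⟩) | ⟨⟨i, j⟩, rfl⟩) |
    ⟨⟨i, j⟩, rfl⟩) | ⟨⟨i, j⟩, rfl⟩) <;>
    obtain ⟨h1, h2, h3, h4, h5, h6⟩ := serre_relations i j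
  · simpa [Relations.HH, hH, ev_comm] using ev_eq_zero_of_null unit h1
  · have := ev_eq_zero_of_null unit h2
    by_cases hij : i = j
    · subst hij
      simpa [Relations.EF, hH, hE, hF, ev_comm, add_comm, ← sub_eq_add_neg] using this
    · simpa [Relations.EF, hij, hE, hF, ev_comm] using this
  · simpa [Relations.HE, hH, hE, ev_comm, add_comm, ← sub_eq_add_neg]
      using ev_eq_zero_of_null unit h3
  · simpa [Relations.HF, hH, hF, ev_comm, add_comm] using ev_eq_zero_of_null unit h4
  · simpa [Relations.adE, had, hE, ev_commPow, ev_comm] using ev_eq_zero_of_null unit h5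
  · simpa [Relations.adF, had, hF, ev_commPow, ev_comm] using ev_eq_zero_of_null unit h6

end Rep

end F4

end

noncomputable section

namespace F4

/-- A family of vectors multiplying like the Chevalley basis of a Lie algebra of type `F₄`. The
vectors `0`–`3` are the simple coroots, `4`–`27` the positive and `28`–`51` the negative root
vectors. -/
structure IsChevalley {L : Type*} [LieRing L] [LieAlgebra ℂ L] (x : ℕ → L) : Prop where
  zero : ∀ i, 52 ≤ i → x i = 0
  lie : ∀ i j, ⁅x i, x j⁆ = ev x (T i j)
  span : Submodule.span ℂ (Set.range x) = ⊤
  indep : ∀ c : ℕ → ℂ, ∑ i ∈ Finset.range 52, c i • x i = 0 → ∀ i < 52, c i = 0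

section Rep

attribute [local instance] LieRing.ofAssociativeRing LieAlgebra.ofAssociativeAlgebra

/-- The linear map taking a matrix to the combination of the vectors `y` given by its
coordinates. -/
def coordMap {M : Type*} [AddCommGroup M] [Module ℂ M] (y : ℕ → M) :
    Module.End ℂ (ℕ →₀ ℂ) →ₗ[ℂ] M :=
  ∑ n ∈ Finset.range 729,
    (Finsupp.lapply (n / 27) ∘ₗ LinearMap.applyₗ (Finsupp.single (n % 27) (1 : ℂ))).smulRight
      (ev y (pivot n))

lemma pivot_eq_nil {n : ℕ} (hn : 729 ≤ n) : pivot n = [] := by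
  have : nth [] pivots (n / 27) = [] := by
    rw [nth_eq]
    exact List.getD_eq_default _ _ (by simp only [pivots, List.length_cons, List.length_nil]; omega)
  unfold pivot
  change fold _ [] (nth [] pivots (n / 27)) = []
  rw [this, fold_nil]

lemma coordMap_unit {M : Type*} [AddCommGroup M] [Module ℂ M] (y : ℕ → M) (m : ℕ) :
    coordMap y (unit m) = ev y (pivot m) := by
  have key (n : ℕ) : (unit m (Finsupp.single (n % 27) (1 : ℂ))) (n / 27) =
      if n = m then 1 else 0 := by
    by_cases h : n = m
    · simp [unit, h]
    · rw [if_neg h]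
      by_cases h' : n % 27 = m % 27
      · have : m / 27 ≠ n / 27 := by omega
        simp [unit, h', this]
      · simp [unit, h']
  have hsum : coordMap y (unit m) =
      ∑ n ∈ Finset.range 729, if n = m then ev y (pivot n) else 0 := by
    rw [coordMap, LinearMap.sum_apply]
    refine Finset.sum_congr rfl fun n _ => ?_
    change ((unit m (Finsupp.single (n % 27) (1 : ℂ))) (n / 27)) • ev y (pivot n) = _
    rw [key]
    split_ifs <;> simp
  have hm (N : ℕ) (hN : N ≤ m → pivot m = []) :
      (∑ n ∈ Finset.range N, if n = m then ev y (pivot n) else 0) = ev y (pivot m) := by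
    rw [Finset.sum_ite_eq']
    split_ifs with h
    · rfl
    · rw [hN (by simpa using h), ev_nil]
  rw [hsum]
  exact hm 729 fun h => pivot_eq_nil (by omega)

lemma coordMap_ev {M : Type*} [AddCommGroup M] [Module ℂ M] (y : ℕ → M) (s : Comb) :
    coordMap y (ev unit s) = ev y (subst pivot s) := by
  rw [ev_subst]
  induction s with
  | nil => rw [ev_nil, ev_nil, map_zero]
  | cons p s ih => rw [ev_cons, ev_cons, map_add, map_zsmul, ih, coordMap_unit]

set_option maxRecDepth 100000 in
lemma subst_pivot_mat : all (fun j => decide (collect (subst pivot (mat j)) = [(j, 1)]))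
    (List.range 52) = true := by
  decide +kernel

lemma coordMap_mat {M : Type*} [AddCommGroup M] [Module ℂ M] (y : ℕ → M) {j : ℕ} (hj : j < 52) :
    coordMap y (ev unit (mat j)) = y j := by
  have := of_decide_eq_true (all_eq_true subst_pivot_mat j (List.mem_range.2 hj))
  rw [coordMap_ev, ← ev_collect, this]
  simp

lemma mat_eq_nil {n : ℕ} (hn : 52 ≤ n) : mat n = [] := by
  have h1 : Nat.blt n 28 = false := by
    rw [← Bool.not_eq_true, Nat.blt_eq]; omega
  have h2 : nth [] posMat (n - 24) = [] := by
    rw [nth_eq]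
    exact List.getD_eq_default _ _ (by simp only [posMat, List.length_cons, List.length_nil]; omega)
  rw [mat, h1, sel_false]
  change fold _ [] (nth [] posMat (n - 24)) = []
  rw [h2, fold_nil]

/-- The entry `(i, j, c)` in position `k` means that the bracket of the vectors `i` and `j` is `c`
times the vector `k + 8`. -/
def parents : List (ℕ × ℕ × ℤ) :=
  [(5, 4, 1), (6, 5, 1), (7, 6, 1), (6, 8, 1), (5, 9, 2), (7, 9, 1), (5, 11, 1), (7, 11, 1),
    (7, 12, 1), (4, 14, 2), (7, 14, 1), (6, 16, 1), (7, 17, 1), (6, 18, 1), (6, 20, 1),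
    (5, 21, 1), (5, 22, 1), (5, 24, 2), (6, 25, 1), (7, 26, 1)]

set_option maxRecDepth 100000 in
lemma parents_spec : ∀ k ∈ Finset.range 20, ∃ i ∈ Finset.Ico 4 8, ∃ j ∈ Finset.Ico 4 (k + 8),
    ∃ c ∈ ({1, 2} : Finset ℤ),
      null (scaleOnto (-c) (mat (k + 8)) (comm (mat i) (mat j))) = true ∧
      null (scaleOnto c (mat (k + 32)) (comm (mat (i + 24)) (mat (j + 24)))) = true := by
  intro k hk
  have h : ∀ k ∈ Finset.range 20,
    ((nth 0 parents k).1 ∈ Finset.Ico 4 8 ∧ (nth 0 parents k).2.1 ∈ Finset.Ico 4 (k + 8) ∧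
      (nth 0 parents k).2.2 ∈ ({1, 2} : Finset ℤ)) ∧
      null (scaleOnto (-(nth 0 parents k).2.2) (mat (k + 8))
        (comm (mat (nth 0 parents k).1) (mat (nth 0 parents k).2.1))) = true ∧
      null (scaleOnto (nth 0 parents k).2.2 (mat (k + 32))
        (comm (mat ((nth 0 parents k).1 + 24)) (mat ((nth 0 parents k).2.1 + 24)))) = true := by
    decide +kernel
  obtain ⟨⟨h1, h2, h3⟩, h4⟩ := h k hk
  exact ⟨_, h1, _, h2, _, h3, h4⟩

set_option maxRecDepth 100000 in
lemma lie_gen_closed : ∀ s : Fin 4 × Fin 2, ∀ j ∈ Finset.range 52,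
    null (scaleOnto (-1) (comm (mat (s.1 + 4 + 24 * s.2)) (mat j))
      (subst mat (T (s.1 + 4 + 24 * s.2) j))) = true := by
  decide +kernel

section Existence

variable {L : Type*} [LieRing L] [LieAlgebra ℂ L] {ρ : L →ₗ⁅ℂ⁆ Module.End ℂ (ℕ →₀ ℂ)}
  {g : CartanMatrix.Generators (Fin 4) → L} (hg : ∀ s, ρ (g s) = ev unit (mat (genIdx s)))
  (htop : ∀ N : LieSubalgebra ℂ L, (∀ s, g s ∈ N) → N = ⊤)

lemma exists_map_eq_of_null {k i j : ℕ} {c : ℤ} (hc : c ≠ 0)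
    (h : null (scaleOnto c (mat k) (comm (mat i) (mat j))) = true)
    (hi : ∃ y, ρ y = ev unit (mat i)) (hj : ∃ y, ρ y = ev unit (mat j)) :
    ∃ y, ρ y = ev unit (mat k) := by
  obtain ⟨y, hy⟩ := hi
  obtain ⟨z, hz⟩ := hj
  have := ev_eq_zero_of_null unit h
  rw [ev_scaleOnto, ev_comm, ← hy, ← hz, ← LieHom.map_lie, ← Int.cast_smul_eq_zsmul ℂ] at this
  have hc' : (c : ℂ) ≠ 0 := by exact_mod_cast hc
  refine ⟨(-(c : ℂ)⁻¹) • ⁅y, z⁆, ?_⟩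
  have key {V : Type _} [AddCommGroup V] [Module ℂ V] (a b : V) (h : (c : ℂ) • a + b = 0) :
      (-(c : ℂ)⁻¹) • b = a := by
    rw [eq_neg_of_add_eq_zero_right h, neg_smul, smul_neg, neg_neg, inv_smul_smul₀ hc']
  rw [map_smul]
  exact key (V := Module.End ℂ (ℕ →₀ ℂ)) _ _ this

include hg in
lemma exists_map_eq_mat (i : ℕ) : ∃ y, ρ y = ev unit (mat i) := by
  have hE (k : ℕ) (hk : k < 4) : ∃ y, ρ y = ev unit (mat (k + 4)) :=
    ⟨_, (hg (.E ⟨k, hk⟩)).trans (by rw [genIdx, add_comm])⟩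
  have hF (k : ℕ) (hk : k < 4) : ∃ y, ρ y = ev unit (mat (k + 28)) :=
    ⟨_, (hg (.F ⟨k, hk⟩)).trans (by rw [genIdx, add_comm])⟩
  have hroot (k : ℕ) : 4 ≤ k → k < 28 →
      (∃ y, ρ y = ev unit (mat k)) ∧ ∃ y, ρ y = ev unit (mat (k + 24)) := by
    induction k using Nat.strong_induction_on with
    | _ k ih =>
      intro h4 h28
      by_cases h8 : k < 8
      · obtain ⟨k, rfl⟩ := Nat.exists_eq_add_of_le' h4
        exact ⟨hE k (by omega), hF k (by omega)⟩
      · obtain ⟨k, rfl⟩ := Nat.exists_eq_add_of_le' (not_lt.1 h8)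
        obtain ⟨i, hi, j, hj, c, hc, h1, h2⟩ := parents_spec k (Finset.mem_range.2 (by omega))
        rw [Finset.mem_Ico] at hi hj
        have hc0 : c ≠ 0 := by rintro rfl; simp at hc
        obtain ⟨i1, i2⟩ := ih i (by omega) hi.1 (by omega)
        obtain ⟨j1, j2⟩ := ih j (by omega) hj.1 (by omega)
        exact ⟨exists_map_eq_of_null (neg_ne_zero.2 hc0) h1 i1 j1,
          exists_map_eq_of_null hc0 h2 i2 j2⟩
  rcases lt_or_ge i 4 with h | h
  · exact ⟨_, hg (.H ⟨i, h⟩)⟩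
  rcases lt_or_ge i 28 with h' | h'
  · exact (hroot i h h').1
  rcases lt_or_ge i 52 with h'' | h''
  · obtain ⟨i, rfl⟩ := Nat.exists_eq_add_of_le' (show 24 ≤ i by omega)
    exact (hroot i (by omega) (by omega)).2
  · exact ⟨0, by rw [mat_eq_nil h'', map_zero, ev_nil]⟩

omit hg in
lemma map_ev_eq {x : ℕ → L} (hx : ∀ i, ρ (x i) = ev unit (mat i)) (s : Comb) :
    ρ (ev x s) = ev unit (subst mat s) := by
  rw [ev_subst]
  induction s with
  | nil => simp
  | cons p s ih => simp [ih, hx, ← Int.cast_smul_eq_zsmul ℂ]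

include hg htop in
lemma exists_isChevalley_of_rep [LieAlgebra.IsSimple ℂ L] : ∃ x : ℕ → L, IsChevalley x := by
  have hinj : Function.Injective ρ := by
    rw [← LieHom.ker_eq_bot]
    refine (LieAlgebra.IsSimple.eq_bot_or_eq_top ρ.ker).resolve_right fun htop => ?_
    have h0 : ρ (g (.E 0)) = 0 := LieHom.mem_ker.1 (htop ▸ LieSubmodule.mem_top _)
    have := coordMap_mat (fun n => Finsupp.single n (1 : ℂ)) (j := 4) (by norm_num)
    rw [show ev unit (mat 4) = 0 from (hg (.E 0)).symm.trans h0, map_zero] at this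
    exact one_ne_zero (Finsupp.single_eq_zero.1 this.symm)
  choose x hx using exists_map_eq_mat hg
  have hzero (i : ℕ) (hi : 52 ≤ i) : x i = 0 :=
    hinj (by rw [hx, mat_eq_nil hi, map_zero, ev_nil])
  have hgx (s) : g s = x (genIdx s) := hinj (by rw [hg, hx])
  set S := Submodule.span ℂ (Set.range x)
  have hxS (i : ℕ) : x i ∈ S := Submodule.subset_span ⟨i, rfl⟩
  have hgen (i : ℕ) (hi : ∀ j ∈ Finset.range 52, null (scaleOnto (-1) (comm (mat i) (mat j))
      (subst mat (T i j))) = true) (j : ℕ) : ⁅x i, x j⁆ ∈ S := by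
    by_cases hj : j < 52
    · have := ev_eq_zero_of_null unit (hi j (Finset.mem_range.2 hj))
      have h : ⁅x i, x j⁆ = ev x (T i j) := by
        refine hinj ?_
        rw [map_ev_eq hx, LieHom.map_lie, hx, hx, ← ev_comm]
        rw [ev_scaleOnto, neg_one_zsmul, neg_add_eq_zero] at this
        exact this
      rw [h]
      exact ev_mem hxS _
    · rw [hzero j (not_lt.1 hj), lie_zero]
      exact S.zero_mem
  let N : LieSubalgebra ℂ L :=
    { carrier := {y | ∀ v ∈ S, ⁅y, v⁆ ∈ S}
      add_mem' := fun ha hb v hv => by rw [add_lie]; exact S.add_mem (ha v hv) (hb v hv)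
      zero_mem' := fun v _ => by rw [zero_lie]; exact S.zero_mem
      smul_mem' := fun c a ha v hv => by rw [smul_lie]; exact S.smul_mem c (ha v hv)
      lie_mem' := fun {a b} ha hb v hv => by
        rw [lie_lie]; exact S.sub_mem (ha _ (hb v hv)) (hb _ (ha v hv)) }
  have hmem (y : L) (hy : ∀ j, ⁅y, x j⁆ ∈ S) : y ∈ N := by
    intro v hv
    induction hv using Submodule.span_induction with
    | mem v hv => obtain ⟨j, rfl⟩ := hv; exact hy j
    | zero => rw [lie_zero]; exact S.zero_mem
    | add v w _ _ h1 h2 => rw [lie_add]; exact S.add_mem h1 h2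
    | smul c v _ h1 => rw [lie_smul]; exact S.smul_mem c h1
  have hEN (k : Fin 4) : g (.E k) ∈ N := by
    rw [hgx]
    refine hmem _ (hgen _ ?_)
    simpa [genIdx, add_comm] using lie_gen_closed (k, 0)
  have hFN (k : Fin 4) : g (.F k) ∈ N := by
    rw [hgx]
    refine hmem _ (hgen _ ?_)
    simpa [genIdx, add_comm, add_left_comm] using lie_gen_closed (k, 1)
  have hHN (k : Fin 4) : g (.H k) ∈ N := by
    have : g (.H k) = ⁅g (.E k), g (.F k)⁆ := by
      refine hinj ?_
      rw [LieHom.map_lie, hg, hg, hg, ← ev_comm]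
      have := ev_eq_zero_of_null unit (serre_relations k k).2.1
      rw [if_pos rfl, ev_scaleOnto, neg_one_zsmul, neg_add_eq_zero] at this
      exact this
    rw [this]
    exact N.lie_mem (hEN k) (hFN k)
  have hNtop : N = ⊤ := htop N fun s => by
    cases s with
    | H k => exact hHN k
    | E k => exact hEN k
    | F k => exact hFN k
  have hS : S = ⊤ := by
    let I : LieIdeal ℂ L := { S with
      lie_mem := fun {y v} hv => by
        have : y ∈ N := hNtop ▸ LieSubalgebra.mem_top y
        exact this v hv }
    have hI : I = ⊤ := by
      refine (LieAlgebra.IsSimple.eq_bot_or_eq_top I).resolve_left fun hbot => ?_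
      have h0 : x 4 = 0 := (LieSubmodule.mem_bot _).1 (hbot ▸ (show x 4 ∈ I from hxS 4))
      have := coordMap_mat (fun n => Finsupp.single n (1 : ℂ)) (j := 4) (by norm_num)
      rw [← hx, h0, map_zero, map_zero] at this
      exact one_ne_zero (Finsupp.single_eq_zero.1 this.symm)
    refine eq_top_iff.2 fun v _ => ?_
    exact (hI ▸ LieSubmodule.mem_top v : v ∈ I)
  have hcoord (v : L) : coordMap x (ρ v) = v := by
    have hv : v ∈ S := hS ▸ Submodule.mem_top
    induction hv using Submodule.span_induction with
    | mem v hv =>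
      obtain ⟨j, rfl⟩ := hv
      by_cases hj : j < 52
      · rw [hx, coordMap_mat x hj]
      · rw [hzero j (not_lt.1 hj), map_zero, map_zero]
    | zero => rw [map_zero, map_zero]
    | add v w _ _ h1 h2 => rw [map_add, map_add, h1, h2]
    | smul c v _ h1 => rw [map_smul, map_smul, h1]
  refine ⟨x, hzero, fun i j => ?_, hS, fun c hc i hi => ?_⟩
  · rw [← hcoord ⁅x i, x j⁆, LieHom.map_lie, hx, hx, ← ev_comm, ← ev_collect, coordMap_ev, T,
      coords, ev_collect]
  · have h := congrArg (fun v => coordMap (fun n => Finsupp.single n (1 : ℂ)) (ρ v) i) hc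
    simp only [map_sum, map_smul, hx, map_zero] at h
    rw [Finset.sum_congr rfl (fun j hj => by rw [coordMap_mat _ (Finset.mem_range.1 hj)]),
      Finsupp.finsetSum_apply] at h
    simpa [Finsupp.single_apply, hi] using h

end Existence

/-- A simple Lie algebra of type `F₄` has a Chevalley basis. -/
theorem exists_isChevalley {L : Type*} [LieRing L] [LieAlgebra ℂ L] [LieAlgebra.IsSimple ℂ L]
    (φ : L ≃ₗ⁅ℂ⁆ LieAlgebra.f₄ ℂ) : ∃ x : ℕ → L, IsChevalley x := by
  obtain ⟨ρ, hρ⟩ := exists_rep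
  refine exists_isChevalley_of_rep (ρ := ρ.comp φ.toLieHom)
    (g := fun s => φ.symm (serreMk CartanMatrix.F₄ (FreeLieAlgebra.of ℂ s)))
    (fun s => ?_) (fun N hN => ?_)
  · rw [← hρ s]
    exact congrArg ρ (φ.apply_symm_apply _)
  · have := eq_top_of_serre_generators_mem CartanMatrix.F₄ (N.comap φ.symm.toLieHom) hN
    refine eq_top_iff.2 fun y _ => ?_
    have hy : φ y ∈ N.comap φ.symm.toLieHom := this ▸ LieSubalgebra.mem_top _
    have hy' : φ.symm (φ y) ∈ N := hy
    rwa [φ.symm_apply_apply] at hy'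

end Rep

end F4

end

noncomputable section

namespace F4

/-! ### Coordinates -/

namespace IsChevalley

variable {L : Type*} [LieRing L] [LieAlgebra ℂ L] {x : ℕ → L} (hx : IsChevalley x)

include hx in
lemma linearIndependent : LinearIndependent ℂ fun i : Fin 52 => x i := by
  refine Fintype.linearIndependent_iff.2 fun c hc i => ?_
  have := hx.indep (fun n => if h : n < 52 then c ⟨n, h⟩ else 0) ?_ i i.2
  · simpa using this
  · rw [Finset.sum_range]
    simpa using hc

include hx in
lemma top_le_span : ⊤ ≤ Submodule.span ℂ (Set.range fun i : Fin 52 => x i) := by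
  rw [← hx.span, Submodule.span_le]
  rintro _ ⟨i, rfl⟩
  by_cases hi : i < 52
  · exact Submodule.subset_span ⟨⟨i, hi⟩, rfl⟩
  · rw [hx.zero i (not_lt.1 hi)]
    exact Submodule.zero_mem _

/-- The coordinates with respect to a Chevalley basis. -/
def coord (k : ℕ) : L →ₗ[ℂ] ℂ :=
  if h : k < 52 then (Module.Basis.mk hx.linearIndependent hx.top_le_span).coord ⟨k, h⟩ else 0

lemma coord_apply {k : ℕ} (hk : k < 52) (j : ℕ) : hx.coord k (x j) = if j = k then 1 else 0 := by
  by_cases hj : j < 52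
  · have : x j = Module.Basis.mk hx.linearIndependent hx.top_le_span ⟨j, hj⟩ := by simp
    rw [coord, dif_pos hk, this, Module.Basis.coord_apply, Module.Basis.repr_self]
    simp [Finsupp.single_apply]
  · rw [hx.zero j (not_lt.1 hj), map_zero, if_neg (by omega)]

lemma sum_coord (v : L) : ∑ k ∈ Finset.range 52, hx.coord k v • x k = v := by
  have h := (Module.Basis.mk hx.linearIndependent hx.top_le_span).sum_repr v
  rw [Finset.sum_range]
  simpa [coord] using h

lemma ext {v w : L} (h : ∀ k < 52, hx.coord k v = hx.coord k w) : v = w := by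
  rw [← hx.sum_coord v, ← hx.sum_coord w]
  exact Finset.sum_congr rfl fun k hk => by rw [h k (Finset.mem_range.1 hk)]

lemma coord_ev {k : ℕ} (hk : k < 52) (s : Comb) : hx.coord k (ev x s) = coeff s k := by
  induction s with
  | nil => simp [coeff]
  | cons p s ih =>
    change _ = ((sel (Nat.beq p.1 k) (p.2 + coeff s k) (coeff s k) : ℤ) : ℂ)
    rw [ev_cons, map_add, map_zsmul, ih, hx.coord_apply hk, nat_beq, sel_decide]
    split_ifs <;> simp

include hx in
lemma ne_zero {k : ℕ} (hk : k < 52) : x k ≠ 0 := fun h => by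
  simpa [h] using hx.coord_apply hk k

include hx in
lemma lie_ev_ev (s t : Comb) : ⁅ev x s, ev x t⁆ = ev x (bilin T s t) := F4.lie_ev_ev hx.lie s t

lemma coord_lie (s : Comb) (v : L) {r : ℕ} (hr : r < 52) :
    hx.coord r ⁅ev x s, v⁆ =
      ∑ k ∈ Finset.range 52, hx.coord k v * coeff (bilin T s [(k, 1)]) r := by
  conv_lhs => rw [← hx.sum_coord v]
  rw [lie_sum, map_sum]
  refine Finset.sum_congr rfl fun k _ => ?_
  have : x k = ev x [(k, 1)] := by simp
  rw [lie_smul, map_smul, smul_eq_mul, this, hx.lie_ev_ev, hx.coord_ev hr]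

include hx in
lemma map_equiv (g : L ≃ₗ⁅ℂ⁆ L) : IsChevalley fun k => g (x k) where
  zero i hi := by rw [hx.zero i hi]; exact g.toLinearEquiv.map_zero
  lie i j := by
    rw [← LieEquiv.map_lie, hx.lie]
    exact map_ev x (g : L →+ L) _
  span := by
    have : Set.range (fun k => g (x k)) = g.toLinearEquiv '' Set.range x := by
      rw [← Set.range_comp]; rfl
    rw [this]
    refine (Submodule.span_image (g.toLinearEquiv : L →ₗ[ℂ] L)).trans ?_
    rw [hx.span, Submodule.map_top, LinearEquiv.range]
  indep c hc := by
    refine hx.indep c (g.toLinearEquiv.injective ?_)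
    rw [map_zero, ← hc, map_sum]
    exact Finset.sum_congr rfl fun _ _ => map_smul g.toLinearEquiv _ _

lemma finrank_eq_card {ι : Type*} [Fintype ι] [DecidableEq ι] (S : Submodule ℂ L) (p : ι → ℕ)
    (y : ι → L) (hy : ∀ i, y i ∈ S) (hp : ∀ i j, hx.coord (p i) (y j) = if j = i then 1 else 0)
    (hS : ∀ v ∈ S, v = ∑ i, hx.coord (p i) v • y i) : Module.finrank ℂ S = Fintype.card ι := by
  let φ : S →ₗ[ℂ] ι → ℂ := LinearMap.pi fun i => hx.coord (p i) ∘ₗ S.subtype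
  have hφ : Function.Bijective φ := by
    constructor
    · refine (injective_iff_map_eq_zero φ).2 fun v hv => Subtype.ext ?_
      have (i : ι) : hx.coord (p i) v = 0 := congrFun hv i
      rw [hS v v.2]
      simp [this]
    · intro c
      refine ⟨⟨∑ j, c j • y j, S.sum_mem fun j _ => S.smul_mem _ (hy j)⟩, funext fun i => ?_⟩
      change hx.coord (p i) (∑ j, c j • y j) = c i
      simp [hp]
  rw [(LinearEquiv.ofBijective φ hφ).finrank_eq, Module.finrank_fintype_fun_eq_card]

end IsChevalley

/-! ### Linear equations over the integers -/

/-- Eliminate the leading term of `r` from `s`. -/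
def reduceOne (r s : Comb) : Comb :=
  List.rec (motive := fun _ => Comb) s (fun p _ _ =>
    sel (isZero p.2) s (sel (isZero (coeff s p.1)) s
      (collect (scaleOnto p.2 s (scaleOnto (Int.neg (coeff s p.1)) r []))))) r

/-- Eliminate the leading terms of the members of `B`, starting with the last one. -/
def reduce (B : List Comb) (s : Comb) : Comb := fold reduceOne s B

/-- Add a linear form to a list in echelon form. -/
def addRow (s : Comb) (B : List Comb) : List Comb :=
  List.rec (motive := fun _ => List Comb) B (fun _ _ _ => reduce B s :: B) (reduce B s)

/-- The brackets of `s` with the basis vectors. -/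
def columns (s : Comb) : List (ℕ × Comb) :=
  fold (fun k r => (k, collect (bilin T s [(k, 1)])) :: r) [] (List.range 52)

/-- The linear form giving one coordinate of a bracket. -/
def row (l : List (ℕ × Comb)) (r : ℕ) : Comb :=
  fold (fun p s => sel (isZero (coeff p.2 r)) s ((p.1, coeff p.2 r) :: s)) [] l

/-- Add the linear forms giving the coordinates of the bracket with `s`. -/
def addRows (l : List (ℕ × Comb)) (B : List Comb) : List Comb :=
  fold (fun r B => addRow (row l r) B) B (List.range 52)

/-- Linear forms in echelon form defining the common centralizer of some elements. -/
def echelon (els : List Comb) : List Comb := fold (fun s B => addRows (columns s) B) [] els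

/-- Decide whether linear forms vanish on the common centralizer of some elements. -/
def vanish (els targets : List Comb) : Bool :=
  all (fun t => null (reduce (echelon els) t)) targets

section vanish

variable {c : ℕ → ℂ}

lemma ev_reduceOne {r : Comb} (hr : ev c r = 0) (s : Comb) :
    ev c (reduceOne r s) = 0 ↔ ev c s = 0 := by
  cases r with
  | nil => rfl
  | cons p r =>
    change ev c (sel (isZero p.2) s (sel (isZero (coeff s p.1)) s
      (collect (scaleOnto p.2 s (scaleOnto (Int.neg (coeff s p.1)) (p :: r) []))))) = 0 ↔ _
    rw [isZero_eq, sel_decide, isZero_eq, sel_decide]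
    split_ifs with h1 h2
    · rfl
    · rfl
    · rw [ev_collect, ev_scaleOnto, ev_scaleOnto, hr, ev_nil, smul_zero, add_zero, add_zero,
        smul_eq_zero]
      simp [h1]

lemma ev_reduce {B : List Comb} (hB : ∀ r ∈ B, ev c r = 0) (s : Comb) :
    ev c (reduce B s) = 0 ↔ ev c s = 0 := by
  induction B with
  | nil => rfl
  | cons r B ih =>
    change ev c (reduceOne r (reduce B s)) = 0 ↔ _
    rw [ev_reduceOne (hB r (by simp)), ih fun r hr => hB r (by simp [hr])]

lemma ev_addRow {B : List Comb} (hB : ∀ r ∈ B, ev c r = 0) {s : Comb} (hs : ev c s = 0) :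
    ∀ r ∈ addRow s B, ev c r = 0 := by
  have h : addRow s B = B ∨ addRow s B = reduce B s :: B := by
    unfold addRow
    cases reduce B s <;> simp
  intro r hr
  rcases h with h | h <;> rw [h] at hr
  · exact hB r hr
  · rcases List.mem_cons.1 hr with rfl | hr
    · exact (ev_reduce hB s).2 hs
    · exact hB r hr

lemma ev_row (c : ℕ → ℂ) (s : Comb) (r : ℕ) : ev c (row (columns s) r) =
    ∑ k ∈ Finset.range 52, c k * coeff (bilin T s [(k, 1)]) r := by
  have hcoeff (k : ℕ) : coeff (collect (bilin T s [(k, 1)])) r = coeff (bilin T s [(k, 1)]) r := by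
    rw [← ev_intCast_coeff, ev_collect, ev_intCast_coeff]
  have hlist (l : List ℕ) :
      ev c (row (fold (fun k r => (k, collect (bilin T s [(k, 1)])) :: r) [] l) r) =
        (l.map fun k => c k * coeff (bilin T s [(k, 1)]) r).sum := by
    induction l with
    | nil => simp [row]
    | cons k l ih =>
      rw [List.map_cons, List.sum_cons, ← ih, ← hcoeff, fold_cons]
      unfold row
      rw [fold_cons, isZero_eq, sel_decide]
      split_ifs with h
      · change coeff (collect (bilin T s [(k, 1)])) r = 0 at h
        simp [h]
      · rw [ev_cons]
        simp [mul_comm]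
  have hsum (f : ℕ → ℂ) (n : ℕ) : ((List.range n).map f).sum = ∑ k ∈ Finset.range n, f k := by
    induction n with
    | zero => simp
    | succ n ih => simp [List.range_succ, Finset.sum_range_succ, ih]
  exact (hlist _).trans (hsum _ _)

variable {L : Type*} [LieRing L] [LieAlgebra ℂ L] {x : ℕ → L} (hx : IsChevalley x)

lemma ev_echelon {els : List Comb} {v : L} (hv : ∀ s ∈ els, ⁅ev x s, v⁆ = 0) :
    ∀ r ∈ echelon els, ev (fun k => hx.coord k v) r = 0 := by
  induction els with
  | nil => simp [echelon]
  | cons s els ih =>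
    have hs := hv s (by simp)
    have ih := ih fun t ht => hv t (by simp [ht])
    change ∀ r ∈ fold (fun r B => addRow (row (columns s) r) B) (echelon els) (List.range 52), _
    have (l : List ℕ) (hl : ∀ k ∈ l, k < 52) :
        ∀ r ∈ fold (fun r B => addRow (row (columns s) r) B) (echelon els) l,
          ev (fun k => hx.coord k v) r = 0 := by
      induction l with
      | nil => exact ih
      | cons k l ihl =>
        refine ev_addRow (ihl fun k hk => hl k (by simp [hk])) ?_
        rw [ev_row, ← hx.coord_lie s v (hl k (by simp)), hs, map_zero]
    exact this _ fun k hk => List.mem_range.1 hk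

lemma ev_eq_zero_of_vanish {els targets : List Comb} (h : vanish els targets = true) {v : L}
    (hv : ∀ s ∈ els, ⁅ev x s, v⁆ = 0) : ∀ t ∈ targets, ev (fun k => hx.coord k v) t = 0 :=
  fun t ht => (ev_reduce (ev_echelon hx hv) t).1 (ev_eq_zero_of_null _ (all_eq_true h t ht))

/-- The rows of a bracket. -/
def rows (s : Comb) : List Comb := (List.range 52).map (row (columns s))

include hx in
lemma lie_eq_zero_of_vanish {els : List Comb} {t : Comb} (h : vanish els (rows t) = true) {v : L}
    (hv : ∀ s ∈ els, ⁅ev x s, v⁆ = 0) : ⁅ev x t, v⁆ = 0 := by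
  refine hx.ext fun k hk => ?_
  rw [hx.coord_lie t v hk, ← ev_row, map_zero]
  exact ev_eq_zero_of_vanish hx h hv _ (List.mem_map_of_mem (List.mem_range.2 hk))

/-- The linear forms defining the span of the members of `P`, where the first component of each
member is the position of a coordinate which is `1` on this member and `0` on the other ones. -/
def spanEqs (P : List (ℕ × Comb)) : List Comb :=
  (List.range 52).map fun r => (r, 1) :: fold (fun p s => (p.1, Int.neg (coeff p.2 r)) :: s) [] P

lemma eq_sum_of_vanish {els : List Comb} {P : List (ℕ × Comb)}
    (h : vanish els (spanEqs P) = true) {v : L} (hv : ∀ s ∈ els, ⁅ev x s, v⁆ = 0) :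
    v = (P.map fun p => hx.coord p.1 v • ev x p.2).sum := by
  refine hx.ext fun k hk => ?_
  have := ev_eq_zero_of_vanish hx h hv _ (List.mem_map_of_mem (List.mem_range.2 hk))
  have hP : ev (fun k => hx.coord k v) (fold (fun p s => (p.1, Int.neg (coeff p.2 k)) :: s) [] P) =
      -hx.coord k (P.map fun p => hx.coord p.1 v • ev x p.2).sum := by
    clear h this
    induction P with
    | nil => simp
    | cons p P ih =>
      rw [fold_cons, ev_cons, ih, List.map_cons, List.sum_cons, map_add, map_smul, hx.coord_ev hk]
      change (-coeff p.2 k) • hx.coord p.1 v + _ = _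
      simp [mul_comm]
      ring
  rw [ev_cons, hP, one_smul, ← sub_eq_add_neg, sub_eq_zero] at this
  exact this

end vanish

end F4

end

noncomputable section

namespace F4

/-! ### Property (P) for explicit elements -/

section PropertyP

variable {L : Type*} [LieRing L] [LieAlgebra ℂ L]

/-- The subspace `[[f, 𝔤^e], v]`. -/
def bracketSpace (e f v : L) : Submodule ℂ L where
  carrier := {z | ∃ x : L, ⁅x, e⁆ = 0 ∧ ⁅⁅f, x⁆, v⁆ = z}
  add_mem' := by
    rintro _ _ ⟨x, hx, rfl⟩ ⟨y, hy, rfl⟩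
    exact ⟨x + y, by rw [add_lie, hx, hy, add_zero], by rw [lie_add, add_lie]⟩
  zero_mem' := ⟨0, zero_lie e, by rw [lie_zero, zero_lie]⟩
  smul_mem' := by
    rintro c _ ⟨x, hx, rfl⟩
    exact ⟨c • x, by rw [smul_lie, hx, smul_zero], by rw [lie_smul, smul_lie]⟩

lemma lie_mem_bracketSpace {e h f v : L} (ht : IsSl2Triple h e f)
    (hv : InCenterOfCentralizer L e v) {u : L} {p : ℕ} (hu : ⁅h, u⁆ = (p : ℂ) • u)
    (heu : ⁅e, ⁅e, u⁆⁆ = 0) : ⁅u, v⁆ ∈ bracketSpace e f v := by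
  have hp : (p : ℂ) + 2 ≠ 0 := by exact_mod_cast (by omega : p + 2 ≠ 0)
  have hhe : ⁅h, ⁅e, u⁆⁆ = ((p : ℂ) + 2) • ⁅e, u⁆ := by
    rw [leibniz_lie, ht.lie_h_e_nsmul, hu, nsmul_lie, lie_smul, add_smul, add_comm,
      ← Nat.cast_smul_eq_nsmul ℂ, Nat.cast_ofNat]
  have hy : ⁅⁅f, ⁅e, u⁆⁆ - ((p : ℂ) + 2) • u, e⁆ = 0 := by
    rw [← lie_skew, lie_sub, leibniz_lie, ht.lie_e_f, heu, lie_zero, hhe, lie_smul, add_zero,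
      sub_self, neg_zero]
  have hvy := hv.2 _ hy
  rw [← lie_skew, neg_eq_zero, sub_lie, sub_eq_zero, smul_lie] at hvy
  rw [← inv_smul_smul₀ hp ⁅u, v⁆, ← hvy]
  exact Submodule.smul_mem _ _ ⟨⁅e, u⁆, by rw [← lie_skew, heu, neg_zero], rfl⟩

end PropertyP

section Checks

variable {L : Type*} [LieRing L] [LieAlgebra ℂ L] {x : ℕ → L} (hx : IsChevalley x)

include hx in
lemma IsChevalley.lie_eq_smul {s t r : Comb} {c : ℤ}
    (h : null (scaleOnto (-c) r (bilin T s t)) = true) :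
    ⁅ev x s, ev x t⁆ = (c : ℂ) • ev x r := by
  have := ev_eq_zero_of_null x h
  rw [ev_scaleOnto, ← hx.lie_ev_ev, neg_smul, neg_add_eq_zero] at this
  rw [← this, Int.cast_smul_eq_zsmul]

/-- A combination of weight `p` for `h₀` which is killed by the square of `e₀`, and which maps
the three given vectors to given ones. -/
structure IsShift (h₀ e₀ w t u : Comb) (p : ℤ) (r₀ r₁ r₂ : Comb) : Prop where
  weight : null (scaleOnto (-p) u (bilin T h₀ u)) = true
  sq : null (bilin T e₀ (bilin T e₀ u)) = true
  lie_e : null (scaleOnto (-1) r₀ (bilin T u e₀)) = true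
  lie_w : null (scaleOnto (-1) r₁ (bilin T u w)) = true
  lie_t : null (scaleOnto (-1) r₂ (bilin T u t)) = true

include hx in
lemma mem_bracketSpace_of_isShift {h₀ e₀ w t u r₀ r₁ r₂ : Comb} {p : ℕ}
    (hu : IsShift h₀ e₀ w t u p r₀ r₁ r₂) {f v : L}
    (ht : IsSl2Triple (ev x h₀) (ev x e₀) f) (hv : InCenterOfCentralizer L (ev x e₀) v)
    {a b c : ℂ} (hvabc : v = a • ev x e₀ + b • ev x w + c • ev x t) :
    a • ev x r₀ + b • ev x r₁ + c • ev x r₂ ∈ bracketSpace (ev x e₀) f v := by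
  have h1 := hx.lie_eq_smul hu.weight
  have h2 := ev_eq_zero_of_null x hu.sq
  have h3 := hx.lie_eq_smul (c := 1) hu.lie_e
  have h4 := hx.lie_eq_smul (c := 1) hu.lie_w
  have h5 := hx.lie_eq_smul (c := 1) hu.lie_t
  rw [← hx.lie_ev_ev, ← hx.lie_ev_ev] at h2
  rw [Int.cast_natCast] at h1
  have := lie_mem_bracketSpace ht hv h1 h2
  have hlie : ⁅ev x u, v⁆ = a • ev x r₀ + b • ev x r₁ + c • ev x r₂ := by
    rw [hvabc, lie_add, lie_add, lie_smul, lie_smul, lie_smul, h3, h4, h5]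
    simp
  rwa [hlie] at this

/-- The conditions under which the centre of the centralizer of `e₀` is spanned by `e₀`, `w` and
`t`, of weights `2`, `q` and `m` for `h₀`; the coordinates `p₀`, `p₁` and `p₂` are dual to these
vectors. -/
structure IsCenter (h₀ e₀ w t : Comb) (p₀ p₁ p₂ : ℕ) (q m : ℤ) (els : List Comb) : Prop where
  span : vanish (e₀ :: els) (spanEqs [(p₀, e₀), (p₁, w), (p₂, t)]) = true
  lie : all (fun s => null (bilin T e₀ s)) els = true
  top : vanish [e₀] (rows t) = true
  weight_w : null (scaleOnto (-q) w (bilin T h₀ w)) = true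
  weight_t : null (scaleOnto (-m) t (bilin T h₀ t)) = true
  lt : p₀ < 52 ∧ p₁ < 52 ∧ p₂ < 52
  coeff_p₀ : coeff e₀ p₀ = 1 ∧ coeff w p₀ = 0 ∧ coeff t p₀ = 0
  coeff_p₁ : coeff e₀ p₁ = 0 ∧ coeff w p₁ = 1 ∧ coeff t p₁ = 0
  coeff_p₂ : coeff e₀ p₂ = 0 ∧ coeff w p₂ = 0 ∧ coeff t p₂ = 1

include hx in
lemma propertyP_of_isCenter {h₀ e₀ w t : Comb} {p₀ p₁ p₂ q m : ℕ} {els : List Comb}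
    (hc : IsCenter h₀ e₀ w t p₀ p₁ p₂ q m els)
    (hm : 2 < m) (hqm : q ≤ m) {f : L} (ht : IsSl2Triple (ev x h₀) (ev x e₀) f)
    (H : ∀ (v : L) (a b c : ℂ), InCenterOfCentralizer L (ev x e₀) v →
      v = a • ev x e₀ + b • ev x w + c • ev x t → (a ≠ 0 ∨ b ≠ 0 ∨ c ≠ 0) →
      (q = m → ev x w ∈ bracketSpace (ev x e₀) f v) ∧ ev x t ∈ bracketSpace (ev x e₀) f v) :
    PropertyP L (ev x e₀) (ev x h₀) f := by
  obtain ⟨hspan, hels, htz, hhw, hht, ⟨hp₀, hp₁, hp₂⟩, ⟨h00, h01, h02⟩, ⟨h10, h11, h12⟩,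
    h20, h21, h22⟩ := hc
  replace hhw := hx.lie_eq_smul hhw
  replace hht := hx.lie_eq_smul hht
  rw [Int.cast_natCast] at hhw hht
  have key (v) (hv : InCenterOfCentralizer L (ev x e₀) v) :
      v = hx.coord p₀ v • ev x e₀ + hx.coord p₁ v • ev x w + hx.coord p₂ v • ev x t := by
    have := eq_sum_of_vanish hx hspan (v := v) fun s hs => by
      rcases List.mem_cons.1 hs with rfl | hs
      · rw [← lie_skew, hv.1, neg_zero]
      · rw [← lie_skew, hv.2, neg_zero]
        rw [← lie_skew, hx.lie_ev_ev, ev_eq_zero_of_null x (all_eq_true hels s hs), neg_zero]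
    simpa [add_assoc] using this
  have hweight (v) (hv : InCenterOfCentralizer L (ev x e₀) v) (n : ℂ) (hn : ⁅ev x h₀, v⁆ = n • v) :
      (hx.coord p₀ v = 0 ∨ n = 2) ∧ (hx.coord p₁ v = 0 ∨ n = q) ∧
        (hx.coord p₂ v = 0 ∨ n = m) := by
    have h2 : ⁅ev x h₀, v⁆ = (hx.coord p₀ v * 2) • ev x e₀ + (hx.coord p₁ v * q) • ev x w +
        (hx.coord p₂ v * m) • ev x t := by
      conv_lhs => rw [key v hv]
      rw [lie_add, lie_add, lie_smul, lie_smul, lie_smul, hhw, hht, ht.lie_h_e_nsmul, smul_smul,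
        smul_smul, ← Nat.cast_smul_eq_nsmul ℂ, smul_smul, Nat.cast_ofNat]
    rw [hn] at h2
    have e0 := congrArg (hx.coord p₀) h2
    have e1 := congrArg (hx.coord p₁) h2
    have e2 := congrArg (hx.coord p₂) h2
    simp only [map_add, map_smul, hx.coord_ev hp₀, hx.coord_ev hp₁, hx.coord_ev hp₂, h00, h01, h02,
      h10, h11, h12, h20, h21, h22, smul_eq_mul, Int.cast_zero, Int.cast_one, mul_zero, mul_one,
      add_zero, zero_add] at e0 e1 e2
    refine ⟨?_, ?_, ?_⟩
    · refine or_iff_not_imp_left.2 fun h => mul_left_cancel₀ h (by rw [← e0, mul_comm])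
    · refine or_iff_not_imp_left.2 fun h => mul_left_cancel₀ h (by rw [← e1, mul_comm])
    · refine or_iff_not_imp_left.2 fun h => mul_left_cancel₀ h (by rw [← e2, mul_comm])
  have hne (v : L) (hv : InCenterOfCentralizer L (ev x e₀) v) (h0 : v ≠ 0) :
      hx.coord p₀ v ≠ 0 ∨ hx.coord p₁ v ≠ 0 ∨ hx.coord p₂ v ≠ 0 := by
    by_contra! h
    exact h0 (by rw [key v hv, h.1, h.2.1, h.2.2]; simp)
  have ht0 : ev x t ≠ 0 := fun h => by
    have := hx.coord_ev hp₂ t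
    rw [h, h22, map_zero] at this
    simp at this
  have htc : InCenterOfCentralizer L (ev x e₀) (ev x t) := by
    have (y : L) (hy : ⁅y, ev x e₀⁆ = 0) : ⁅ev x t, y⁆ = 0 :=
      lie_eq_zero_of_vanish hx htz fun s hs => by
        rw [List.mem_singleton.1 hs, ← lie_skew, hy, neg_zero]
    exact ⟨this _ (lie_self _), this⟩
  intro n hn hmax v hv hv0 z hz hhz
  obtain ⟨z₀, hz₀, hz₀c, hhz₀⟩ := hn
  have hle : (m : ℂ) ≤ n := hmax m ⟨_, ht0, htc, hht⟩
  have hn2 : n ≠ 2 := by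
    rintro rfl
    have : m ≤ 2 := by exact_mod_cast hle
    omega
  have hnq (h : n = q) : q = m := by
    subst h
    have : m ≤ q := by exact_mod_cast hle
    omega
  obtain ⟨hw, ht⟩ := H v _ _ _ hv (key v hv) (hne v hv hv0)
  change z ∈ bracketSpace (ev x e₀) f v
  rw [key z hz]
  obtain ⟨k0, k1, k2⟩ := hweight z hz n hhz
  rw [k0.resolve_right hn2, zero_smul, zero_add]
  refine Submodule.add_mem _ ?_ (Submodule.smul_mem _ _ ht)
  rcases k1 with k1 | k1
  · rw [k1, zero_smul]
    exact Submodule.zero_mem _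
  · exact Submodule.smul_mem _ _ (hw (hnq k1))

end Checks

end F4

end

noncomputable section

namespace F4

/-! ### The distinguished orbits

The distinguished orbits which are not regular are those of type `F₄(a₁)`, `F₄(a₂)` and
`F₄(a₃)`. -/

def repA₁ : Comb := [(7, 1), (4, 1), (6, 1), (12, 1)]

def neutA₁ : Comb := [(0, 10), (1, 18), (2, 26), (3, 14)]

def repA₂ : Comb := [(4, 1), (9, 1), (10, 1), (16, 1)]

def neutA₂ : Comb := [(0, 8), (1, 14), (2, 20), (3, 10)]

def repA₃ : Comb := [(17, 1), (9, 1), (16, 1), (15, 1)]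

def neutA₃ : Comb := [(0, 4), (1, 8), (2, 12), (3, 6)]

set_option maxRecDepth 100000 in
lemma isCenter_repA₁ : IsCenter neutA₁ repA₁ [(25, 1), (22, 1)] [(27, 1)] 12 22 27 (10 : ℕ)
    (14 : ℕ) [[(13, 1), (11, 1)], [(24, 1)]] := by
  constructor <;> decide +kernel

set_option maxRecDepth 100000 in
lemma isCenter_repA₂ : IsCenter neutA₂ repA₂ [(26, 1)] [(27, 1)] 4 26 27 (10 : ℕ) (10 : ℕ)
    [[(10, 1)], [(13, 1), (6, 3), (8, 1), (12, -1)]] := by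
  constructor <;> decide +kernel

set_option maxRecDepth 100000 in
lemma isCenter_repA₃ : IsCenter neutA₃ repA₃ [(26, 1)] [(27, 1)] 17 26 27 (6 : ℕ) (6 : ℕ)
    [[(12, 1), (10, 2), (11, -1)], [(14, 1), (6, 2), (13, 1)]] := by
  constructor <;> decide +kernel

variable {L : Type*} [LieRing L] [LieAlgebra ℂ L] {x : ℕ → L} (hx : IsChevalley x)

lemma zsmul_mem_iff {M : Type*} [AddCommGroup M] [Module ℂ M] (S : Submodule ℂ M) {n : ℤ}
    (hn : n ≠ 0) {y : M} : n • y ∈ S ↔ y ∈ S := by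
  rw [← Int.cast_smul_eq_zsmul ℂ, S.smul_mem_iff (Int.cast_ne_zero.2 hn)]

include hx in
set_option maxRecDepth 100000 in
lemma propertyP_repA₁ {f : L} (ht : IsSl2Triple (ev x neutA₁) (ev x repA₁) f) :
    PropertyP L (ev x repA₁) (ev x neutA₁) f := by
  refine propertyP_of_isCenter hx isCenter_repA₁ (by norm_num) (by norm_num) ht
    fun v a b c hv hvabc habc => ⟨by norm_num, ?_⟩
  by_cases ha : a = 0
  · by_cases hb : b = 0
    · have hc : c ≠ 0 := by simpa [ha, hb] using habc
      have := mem_bracketSpace_of_isShift hx (p := 0) (u := neutA₁) (r₀ := bilin T neutA₁ repA₁)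
        (r₁ := bilin T neutA₁ [(25, 1), (22, 1)]) (r₂ := [(27, 14)])
        (by constructor <;> decide +kernel) ht hv hvabc
      simpa [ha, hb, Submodule.smul_mem_iff _ hc, zsmul_mem_iff] using this
    · have := mem_bracketSpace_of_isShift hx (p := 4) (u := [(16, 2), (10, -3), (14, 1)])
        (r₀ := bilin T [(16, 2), (10, -3), (14, 1)] repA₁) (r₁ := [(27, -5)]) (r₂ := [])
        (by constructor <;> decide +kernel) ht hv hvabc
      simpa [ha, Submodule.smul_mem_iff _ hb, zsmul_mem_iff] using this
  · have := mem_bracketSpace_of_isShift hx (p := 12) (u := [(26, 1)]) (r₀ := [(27, -1)])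
      (r₁ := []) (r₂ := []) (by constructor <;> decide +kernel) ht hv hvabc
    simpa [Submodule.smul_mem_iff _ ha] using this

include hx in
set_option maxRecDepth 100000 in
lemma propertyP_repA₂ {f : L} (ht : IsSl2Triple (ev x neutA₂) (ev x repA₂) f) :
    PropertyP L (ev x repA₂) (ev x neutA₂) f := by
  refine propertyP_of_isCenter hx isCenter_repA₂ (by norm_num) (by norm_num) ht
    fun v a b c hv hvabc habc => ?_
  suffices h : x 26 ∈ bracketSpace (ev x repA₂) f v ∧ x 27 ∈ bracketSpace (ev x repA₂) f v by
    simpa using h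
  by_cases ha : a = 0
  · have h1 := mem_bracketSpace_of_isShift hx (p := 0) (u := [(31, 3), (5, -1), (7, -5), (29, 3)])
      (r₀ := bilin T [(31, 3), (5, -1), (7, -5), (29, 3)] repA₂) (r₁ := [(27, -5)])
      (r₂ := [(26, 3)]) (by constructor <;> decide +kernel) ht hv hvabc
    have h2 := mem_bracketSpace_of_isShift hx (p := 0) (u := [(2, 5), (0, 4), (1, 7)])
      (r₀ := bilin T [(2, 5), (0, 4), (1, 7)] repA₂) (r₁ := [(26, 5)])
      (r₂ := []) (by constructor <;> decide +kernel) ht hv hvabc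
    have h3 := mem_bracketSpace_of_isShift hx (p := 0) (u := neutA₂)
      (r₀ := bilin T neutA₂ repA₂) (r₁ := [(26, 10)])
      (r₂ := [(27, 10)]) (by constructor <;> decide +kernel) ht hv hvabc
    rw [ha, zero_smul, zero_add] at h1 h2 h3
    by_cases hb : b = 0
    · have hc : c ≠ 0 := by simpa [ha, hb] using habc
      simp only [hb, zero_smul, zero_add] at h1 h3
      exact ⟨by simpa [Submodule.smul_mem_iff _ hc, zsmul_mem_iff] using h1,
        by simpa [Submodule.smul_mem_iff _ hc, zsmul_mem_iff] using h3⟩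
    · have hw : x 26 ∈ bracketSpace (ev x repA₂) f v := by
        simpa [Submodule.smul_mem_iff _ hb, zsmul_mem_iff] using h2
      have hw' : c • ev x [(26, 3)] ∈ bracketSpace (ev x repA₂) f v :=
        Submodule.smul_mem _ _ (by simpa [zsmul_mem_iff] using hw)
      rw [Submodule.add_mem_iff_left _ hw'] at h1
      exact ⟨hw, by simpa [Submodule.smul_mem_iff _ hb, zsmul_mem_iff] using h1⟩
  · have h1 := mem_bracketSpace_of_isShift hx (p := 8) (u := [(24, 1)]) (r₀ := [(26, -2)])
      (r₁ := []) (r₂ := []) (by constructor <;> decide +kernel) ht hv hvabc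
    have h2 := mem_bracketSpace_of_isShift hx (p := 8) (u := [(22, 1)]) (r₀ := [(27, 1)])
      (r₁ := []) (r₂ := []) (by constructor <;> decide +kernel) ht hv hvabc
    exact ⟨by simpa [Submodule.smul_mem_iff _ ha, zsmul_mem_iff] using h1,
      by simpa [Submodule.smul_mem_iff _ ha] using h2⟩

include hx in
set_option maxRecDepth 100000 in
lemma propertyP_repA₃ {f : L} (ht : IsSl2Triple (ev x neutA₃) (ev x repA₃) f) :
    PropertyP L (ev x repA₃) (ev x neutA₃) f := by
  refine propertyP_of_isCenter hx isCenter_repA₃ (by norm_num) (by norm_num) ht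
    fun v a b c hv hvabc habc => ?_
  suffices h : x 26 ∈ bracketSpace (ev x repA₃) f v ∧ x 27 ∈ bracketSpace (ev x repA₃) f v by
    simpa using h
  by_cases ha : a = 0
  · have h1 := mem_bracketSpace_of_isShift hx (p := 0) (u := [(28, 1), (7, 1)])
      (r₀ := bilin T [(28, 1), (7, 1)] repA₃) (r₁ := [(27, 1)])
      (r₂ := []) (by constructor <;> decide +kernel) ht hv hvabc
    have h2 := mem_bracketSpace_of_isShift hx (p := 0) (u := [(31, 1), (4, 1)])
      (r₀ := bilin T [(31, 1), (4, 1)] repA₃) (r₁ := [])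
      (r₂ := [(26, 1)]) (by constructor <;> decide +kernel) ht hv hvabc
    have h3 := mem_bracketSpace_of_isShift hx (p := 0) (u := neutA₃)
      (r₀ := bilin T neutA₃ repA₃) (r₁ := [(26, 6)])
      (r₂ := [(27, 6)]) (by constructor <;> decide +kernel) ht hv hvabc
    rw [ha, zero_smul, zero_add] at h1 h2 h3
    by_cases hb : b = 0
    · have hc : c ≠ 0 := by simpa [ha, hb] using habc
      simp only [hb, zero_smul, zero_add] at h3
      exact ⟨by simpa [Submodule.smul_mem_iff _ hc] using h2,
        by simpa [Submodule.smul_mem_iff _ hc, zsmul_mem_iff] using h3⟩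
    · have hw : x 27 ∈ bracketSpace (ev x repA₃) f v := by
        simpa [Submodule.smul_mem_iff _ hb] using h1
      have hw' : c • ev x [(27, 6)] ∈ bracketSpace (ev x repA₃) f v :=
        Submodule.smul_mem _ _ (by simpa [zsmul_mem_iff] using hw)
      rw [Submodule.add_mem_iff_left _ hw'] at h3
      exact ⟨by simpa [Submodule.smul_mem_iff _ hb, zsmul_mem_iff] using h3, hw⟩
  · have h1 := mem_bracketSpace_of_isShift hx (p := 4) (u := [(19, 1)]) (r₀ := [(26, 1)])
      (r₁ := []) (r₂ := []) (by constructor <;> decide +kernel) ht hv hvabc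
    have h2 := mem_bracketSpace_of_isShift hx (p := 4) (u := [(22, 1)]) (r₀ := [(27, 1)])
      (r₁ := []) (r₂ := []) (by constructor <;> decide +kernel) ht hv hvabc
    exact ⟨by simpa [Submodule.smul_mem_iff _ ha] using h1,
      by simpa [Submodule.smul_mem_iff _ ha] using h2⟩

end F4

end

noncomputable section

namespace F4

/-! ### Weights -/

/-- The coordinates of the positive roots with respect to the simple roots. -/
def posRoots : List (List ℤ) :=
  [[1, 0, 0, 0], [0, 1, 0, 0], [0, 0, 1, 0], [0, 0, 0, 1], [1, 1, 0, 0], [0, 1, 1, 0],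
    [0, 0, 1, 1], [1, 1, 1, 0], [0, 2, 1, 0], [0, 1, 1, 1], [1, 2, 1, 0], [1, 1, 1, 1],
    [0, 2, 1, 1], [2, 2, 1, 0], [1, 2, 1, 1], [0, 2, 2, 1], [2, 2, 1, 1], [1, 2, 2, 1],
    [2, 2, 2, 1], [1, 3, 2, 1], [2, 3, 2, 1], [2, 4, 2, 1], [2, 4, 3, 1], [2, 4, 3, 2]]

/-- The coordinates of the weight of a basis vector with respect to the simple roots. -/
def root (k j : ℕ) : ℤ :=
  nth 0 (nth [] ([[], [], [], []] ++ posRoots ++ posRoots.map fun l => l.map Int.neg) k) j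

/-- The value of the weight of a basis vector at the element of the Cartan subalgebra at which
the simple roots have the values `d`. -/
def wt (d : ℕ → ℤ) (k : ℕ) : ℤ :=
  root k 0 * d 0 + root k 1 * d 1 + root k 2 * d 2 + root k 3 * d 3

/-- The number of basis vectors of a given weight. -/
def mult (d : ℕ → ℤ) (n : ℤ) : ℕ := ((Finset.range 52).filter fun k => wt d k = n).card

/-- The Cartan matrix. -/
def cartan (i j : ℕ) : ℤ :=
  nth 0 (nth [] [[2, -1, 0, 0], [-1, 2, -2, 0], [0, -1, 2, -1], [0, 0, -1, 2]] i) j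

set_option maxRecDepth 100000 in
lemma null_bilin_cartan : ∀ i < 4, ∀ k < 52,
    null (scaleOnto (-wt (cartan i) k) [(k, 1)] (bilin T [(i, 1)] [(k, 1)])) = true := by
  decide +kernel

lemma wt_cartan : ∀ i < 4, ∀ j < 4, wt (cartan i) (j + 4) = cartan i j := by
  decide +kernel

lemma wt_eq_zero (d : ℕ → ℤ) {k : ℕ} (hk : k < 4) : wt d k = 0 := by
  have h : ∀ k < 4, ∀ j < 4, root k j = 0 := by decide +kernel
  simp [wt, h k hk]

lemma wt_nonneg {d : ℕ → ℤ} (hd : ∀ j < 4, 0 ≤ d j) {k : ℕ} (hk : k < 28) : 0 ≤ wt d k := by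
  have h : ∀ k < 28, ∀ j < 4, 0 ≤ root k j := by decide +kernel
  have h' (j : ℕ) (hj : j < 4) : 0 ≤ root k j * d j := mul_nonneg (h k hk j hj) (hd j hj)
  have := h' 0; have := h' 1; have := h' 2; have := h' 3
  unfold wt
  omega

lemma wt_nonpos {d : ℕ → ℤ} (hd : ∀ j < 4, 0 ≤ d j) {k : ℕ} (hk : 28 ≤ k) (hk' : k < 52) :
    wt d k ≤ 0 := by
  have h : ∀ k < 24, ∀ j < 4, root (k + 28) j ≤ 0 := by decide +kernel
  obtain ⟨k, rfl⟩ := Nat.exists_eq_add_of_le' hk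
  have h' (j : ℕ) (hj : j < 4) : root (k + 28) j * d j ≤ 0 :=
    mul_nonpos_of_nonpos_of_nonneg (h k (by omega) j hj) (hd j hj)
  have := h' 0; have := h' 1; have := h' 2; have := h' 3
  unfold wt
  omega

lemma wt_add_four (d : ℕ → ℤ) {j : ℕ} (hj : j < 4) : wt d (j + 4) = d j := by
  have h : ∀ j < 4, ∀ i < 4, root (j + 4) i = if i = j then 1 else 0 := by decide +kernel
  simp only [wt, h j hj _ (by norm_num : 0 < 4), h j hj _ (by norm_num : 1 < 4),
    h j hj _ (by norm_num : 2 < 4), h j hj _ (by norm_num : 3 < 4)]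
  interval_cases j <;> simp

lemma wt_add_twentyEight (d : ℕ → ℤ) {j : ℕ} (hj : j < 4) : wt d (j + 28) = -d j := by
  have h : ∀ j < 4, ∀ i < 4, root (j + 28) i = if i = j then -1 else 0 := by decide +kernel
  simp only [wt, h j hj _ (by norm_num : 0 < 4), h j hj _ (by norm_num : 1 < 4),
    h j hj _ (by norm_num : 2 < 4), h j hj _ (by norm_num : 3 < 4)]
  interval_cases j <;> simp

/-! ### Chevalley bases adapted to a semisimple element -/

variable {L : Type*} [LieRing L] [LieAlgebra ℂ L]

/-- The element `h` is in the Cartan subalgebra given by a Chevalley basis, and the values of the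
simple roots at `h` are the integers `d`. -/
structure IsAdapted (x : ℕ → L) (h : L) (d : ℕ → ℤ) : Prop where
  isChevalley : IsChevalley x
  mem : ∃ a : ℕ → ℂ, h = ∑ i ∈ Finset.range 4, a i • x i
  lie : ∀ j < 4, ⁅h, x (j + 4)⁆ = (d j : ℂ) • x (j + 4)

lemma IsChevalley.lie_cartan {x : ℕ → L} (hx : IsChevalley x) {i k : ℕ} (hi : i < 4)
    (hk : k < 52) : ⁅x i, x k⁆ = (wt (cartan i) k : ℂ) • x k := by
  simpa using hx.lie_eq_smul (null_bilin_cartan i hi k hk)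

namespace IsAdapted

variable {x : ℕ → L} {h : L} {d : ℕ → ℤ} (hd : IsAdapted x h d)

include hd in
lemma lie_eq {k : ℕ} (hk : k < 52) : ⁅h, x k⁆ = (wt d k : ℂ) • x k := by
  obtain ⟨a, ha⟩ := hd.mem
  have hlie (k : ℕ) (hk : k < 52) :
      ⁅h, x k⁆ = (∑ i ∈ Finset.range 4, a i * wt (cartan i) k) • x k := by
    rw [ha, sum_lie, Finset.sum_smul]
    refine Finset.sum_congr rfl fun i hi => ?_
    rw [smul_lie, hd.isChevalley.lie_cartan (Finset.mem_range.1 hi) hk, smul_smul]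
  have hsum (j : ℕ) (hj : j < 4) : ∑ i ∈ Finset.range 4, a i * cartan i j = d j := by
    have := (hlie (j + 4) (by omega)).symm.trans (hd.lie j hj)
    rw [← smul_left_injective ℂ (hd.isChevalley.ne_zero (by omega : j + 4 < 52)) this]
    refine Finset.sum_congr rfl fun i hi => ?_
    rw [wt_cartan i (Finset.mem_range.1 hi) j hj]
  rw [hlie k hk]
  congr 1
  have h0 := hsum 0 (by norm_num)
  have h1 := hsum 1 (by norm_num)
  have h2 := hsum 2 (by norm_num)
  have h3 := hsum 3 (by norm_num)
  simp only [Finset.sum_range_succ, Finset.sum_range_zero] at h0 h1 h2 h3 ⊢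
  simp only [wt, Int.cast_add, Int.cast_mul]
  linear_combination (root k 0 : ℂ) * h0 + root k 1 * h1 + root k 2 * h2 + root k 3 * h3

lemma coord_lie {k : ℕ} (hk : k < 52) (v : L) :
    hd.isChevalley.coord k ⁅h, v⁆ = wt d k * hd.isChevalley.coord k v := by
  conv_lhs => rw [← hd.isChevalley.sum_coord v]
  rw [lie_sum, map_sum, Finset.sum_eq_single k]
  · rw [lie_smul, hd.lie_eq hk, map_smul, map_smul, hd.isChevalley.coord_apply hk]
    simp [mul_comm]
  · intro j hj hjk
    rw [lie_smul, hd.lie_eq (Finset.mem_range.1 hj), map_smul, map_smul,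
      hd.isChevalley.coord_apply hk]
    simp [hjk]
  · intro h'
    exact absurd (Finset.mem_range.2 hk) h'

lemma coord_eq_zero_of_lie_eq_smul {c : ℂ} {v : L} (hv : ⁅h, v⁆ = c • v) {k : ℕ} (hk : k < 52)
    (hc : (wt d k : ℂ) ≠ c) : hd.isChevalley.coord k v = 0 := by
  have := hd.coord_lie hk v
  rw [hv, map_smul, smul_eq_mul] at this
  exact (mul_eq_mul_right_iff.1 this).resolve_left (Ne.symm hc)

lemma coord_eq_zero_of_mem_engel {v : L} (hv : v ∈ LieSubalgebra.engel ℂ h) {k : ℕ} (hk : k < 52)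
    (hc : wt d k ≠ 0) : hd.isChevalley.coord k v = 0 := by
  obtain ⟨n, hn⟩ := (LieSubalgebra.mem_engel_iff ℂ h v).1 hv
  have hpow (m : ℕ) : hd.isChevalley.coord k ((LieAlgebra.ad ℂ L h ^ m) v) =
      (wt d k : ℂ) ^ m * hd.isChevalley.coord k v := by
    induction m with
    | zero => simp
    | succ m ih =>
      rw [pow_succ', Module.End.mul_apply, LieAlgebra.ad_apply (R := ℂ), hd.coord_lie hk, ih,
        pow_succ']
      ring
  have := hpow n
  rw [hn, map_zero, eq_comm, mul_eq_zero] at this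
  exact this.resolve_left (pow_ne_zero _ (Int.cast_ne_zero.2 hc))

include hd in
lemma finrank_eigenspace (n : ℤ) :
    Module.finrank ℂ ((LieAlgebra.ad ℂ L h).eigenspace (n : ℂ)) = mult d n := by
  have hS (v : L) : v ∈ (LieAlgebra.ad ℂ L h).eigenspace (n : ℂ) ↔ ⁅h, v⁆ = (n : ℂ) • v :=
    Module.End.mem_eigenspace_iff
  rw [mult, ← Fintype.card_coe]
  refine hd.isChevalley.finrank_eq_card _ (fun i => i.1) (fun i => x i.1) (fun i => ?_)
    (fun i j => ?_) fun v hv => ?_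
  · obtain ⟨hi, hi'⟩ := Finset.mem_filter.1 i.2
    rw [hS, hd.lie_eq (Finset.mem_range.1 hi), hi']
  · rw [hd.isChevalley.coord_apply (Finset.mem_range.1 (Finset.mem_filter.1 i.2).1)]
    exact if_congr Subtype.ext_iff.symm rfl rfl
  · rw [Finset.sum_coe_sort _ fun k => hd.isChevalley.coord k v • x k]
    conv_lhs => rw [← hd.isChevalley.sum_coord v]
    refine (Finset.sum_subset (Finset.filter_subset _ _) fun k hk hk' => ?_).symm
    rw [hd.coord_eq_zero_of_lie_eq_smul ((hS v).1 hv) (Finset.mem_range.1 hk), zero_smul]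
    intro h'
    exact hk' (Finset.mem_filter.2 ⟨hk, Int.cast_injective h'⟩)

end IsAdapted

/-! ### The Cartan subalgebra -/

/-- The neutral element of the regular orbit. -/
def neutReg : Comb := [(0, 16), (1, 30), (2, 42), (3, 22)]

section cartan

variable {x : ℕ → L} (hx : IsChevalley x)

include hx in
set_option maxRecDepth 100000 in
lemma isAdapted_neutReg : IsAdapted x (ev x neutReg) fun _ => 2 where
  isChevalley := hx
  mem := ⟨fun i => (nth 0 [16, 30, 42, 22] i : ℤ), by
    simp [neutReg, Finset.sum_range_succ, nth_eq, ← Int.cast_smul_eq_zsmul ℂ, add_assoc]⟩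
  lie j hj := by
    have h : ∀ j < 4,
        null (scaleOnto (-2) [(j + 4, 1)] (bilin T neutReg [(j + 4, 1)])) = true := by
      decide +kernel
    simpa using hx.lie_eq_smul (h j hj)

lemma eq_sum_of_mem_engel_neutReg {v : L} (hv : v ∈ LieSubalgebra.engel ℂ (ev x neutReg)) :
    v = ∑ i ∈ Finset.range 4, hx.coord i v • x i := by
  conv_lhs => rw [← hx.sum_coord v]
  refine (Finset.sum_subset (Finset.range_subset_range.2 (by norm_num)) fun k hk hk' => ?_).symm
  have h : ∀ k < 52, 4 ≤ k → wt (fun _ => 2) k ≠ 0 := by decide +kernel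
  rw [Finset.mem_range] at hk hk'
  rw [(isAdapted_neutReg hx).coord_eq_zero_of_mem_engel hv hk (h k hk (by omega)), zero_smul]

include hx in
lemma lie_eq_zero_of_lt_four {i j : ℕ} (hi : i < 4) (hj : j < 4) : ⁅x i, x j⁆ = 0 := by
  rw [hx.lie_cartan hi (by omega), wt_eq_zero _ hj]
  simp

include hx in
lemma finrank_engel_neutReg : Module.finrank ℂ (LieSubalgebra.engel ℂ (ev x neutReg)) = 4 := by
  have := hx.finrank_eq_card (LieSubalgebra.engel ℂ (ev x neutReg)).toSubmodule
    (fun i : Fin 4 => i) (fun i => x i) (fun i => ?_) (fun i j => ?_) fun v hv => ?_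
  · exact this.trans (Fintype.card_fin 4)
  · refine (LieSubalgebra.mem_engel_iff ℂ _ _).2 ⟨1, ?_⟩
    rw [pow_one, LieAlgebra.ad_apply (R := ℂ), (isAdapted_neutReg hx).lie_eq (by omega),
      wt_eq_zero _ i.2]
    simp
  · rw [hx.coord_apply (by omega)]
    simp [Fin.ext_iff]
  · rw [← Finset.sum_range fun i => hx.coord i v • x i]
    exact eq_sum_of_mem_engel_neutReg hx hv

variable [FiniteDimensional ℂ L]

include hx in
lemma finrank_engel_neutReg_eq_rank :
    Module.finrank ℂ (LieSubalgebra.engel ℂ (ev x neutReg)) = LieAlgebra.rank ℂ L := by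
  refine finrank_engel_eq_rank_of_le _ fun y hy z hz => ?_
  refine (LieSubalgebra.mem_engel_iff ℂ _ _).2 ⟨1, ?_⟩
  rw [pow_one, LieAlgebra.ad_apply (R := ℂ), eq_sum_of_mem_engel_neutReg hx hy,
    eq_sum_of_mem_engel_neutReg hx hz, sum_lie]
  refine Finset.sum_eq_zero fun i hi => ?_
  rw [lie_sum]
  refine Finset.sum_eq_zero fun j hj => ?_
  rw [smul_lie, lie_smul,
    lie_eq_zero_of_lt_four hx (Finset.mem_range.1 hi) (Finset.mem_range.1 hj), smul_zero,
    smul_zero]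

include hx in
lemma rank_eq_four : LieAlgebra.rank ℂ L = 4 :=
  (finrank_engel_neutReg_eq_rank hx).symm.trans (finrank_engel_neutReg hx)

end cartan

section exists_isAdapted

variable [FiniteDimensional ℂ L] [LieAlgebra.IsKilling ℂ L] {x : ℕ → L} {e h f : L}

lemma exists_isAdapted (hx : IsChevalley x) (ht : IsSl2Triple h e f)
    (hdist : IsDistinguished L e) : ∃ y d, IsAdapted y h d := by
  obtain ⟨z, hz, hhz⟩ := exists_mem_engel_finrank_eq_rank (lie_h_eq_zero_of_mem_engel ht hdist)
  obtain ⟨g, hg⟩ := exists_lieEquiv_map_engel (finrank_engel_neutReg_eq_rank hx) hz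
  have hy := hx.map_equiv g
  obtain ⟨u, rfl⟩ := g.toLinearEquiv.surjective h
  have hu : u ∈ LieSubalgebra.engel ℂ (ev x neutReg) := (hg u).1 hhz
  have hsum := congrArg g.toLinearEquiv (eq_sum_of_mem_engel_neutReg hx hu)
  rw [map_sum] at hsum
  have hlie (j : ℕ) (hj : j < 4) :
      ∃ d : ℤ, ⁅g.toLinearEquiv u, g (x (j + 4))⁆ = (d : ℂ) • g (x (j + 4)) := by
    have : ∃ c : ℂ, ⁅g.toLinearEquiv u, g (x (j + 4))⁆ = c • g (x (j + 4)) := by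
      refine ⟨∑ i ∈ Finset.range 4, hx.coord i u * wt (cartan i) (j + 4), ?_⟩
      rw [hsum, sum_lie, Finset.sum_smul]
      refine Finset.sum_congr rfl fun i hi => ?_
      rw [map_smul, smul_lie]
      exact (congrArg _ (hy.lie_cartan (Finset.mem_range.1 hi) (by omega))).trans (smul_smul _ _ _)
    obtain ⟨c, hc⟩ := this
    obtain ⟨n, rfl⟩ := exists_int_of_lie_eq_smul ht (hy.ne_zero (by omega : j + 4 < 52)) hc
    exact ⟨n, hc⟩
  choose d hd using hlie
  refine ⟨_, fun j => if hj : j < 4 then d j hj else 0, hy, ⟨fun i => hx.coord i u, ?_⟩,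
    fun j hj => ?_⟩
  · rw [hsum]
    exact Finset.sum_congr rfl fun i _ => map_smul g.toLinearEquiv _ _
  · rw [dif_pos hj]
    exact hd j hj

end exists_isAdapted

end F4

end

noncomputable section

/-! ### Reflections and dominance -/

section lieExp

variable {L : Type*} [LieRing L] [LieAlgebra ℂ L] [FiniteDimensional ℂ L]

lemma lieExp_apply_of_lie_lie_lie_eq_zero {u v : L} (h : ⁅u, ⁅u, ⁅u, v⁆⁆⁆ = 0) :
    lieExp u v = v + ⁅u, v⁆ + (2 : ℂ)⁻¹ • ⁅u, ⁅u, v⁆⁆ := by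
  rw [lieExp_apply_eq_sum u v (n := 3) (by simpa [pow_succ] using h)]
  simp [Finset.sum_range_succ, pow_succ]

lemma lieExp_apply_of_lie_lie_eq_zero {u v : L} (h : ⁅u, ⁅u, v⁆⁆ = 0) :
    lieExp u v = v + ⁅u, v⁆ := by
  rw [lieExp_apply_of_lie_lie_lie_eq_zero (by rw [h, lie_zero]), h, smul_zero, add_zero]

/-- The reflection at an `sl₂`-triple. -/
lemma exists_lieEquiv_reflection {E H F h : L} {c : ℂ} (hEF : ⁅E, F⁆ = H)
    (hHE : ⁅H, E⁆ = (2 : ℂ) • E) (hHF : ⁅H, F⁆ = -(2 : ℂ) • F) (hhE : ⁅h, E⁆ = c • E)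
    (hhF : ⁅h, F⁆ = -c • F) : ∃ g : L ≃ₗ⁅ℂ⁆ L, g h = h - c • H := by
  have hEh : ⁅E, h⁆ = -c • E := by rw [← lie_skew, hhE, neg_smul]
  have hEH : ⁅E, H⁆ = -(2 : ℂ) • E := by rw [← lie_skew, hHE, neg_smul]
  have hFh : ⁅-F, h⁆ = -c • F := by rw [neg_lie, lie_skew, hhF]
  have hFH : ⁅-F, H⁆ = -(2 : ℂ) • F := by rw [neg_lie, lie_skew, hHF]
  have hFE : ⁅-F, E⁆ = H := by rw [neg_lie, lie_skew, hEF]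
  have hE1 : lieExp E h = h - c • E := by
    rw [lieExp_apply_of_lie_lie_eq_zero (by rw [hEh, lie_smul, lie_self, smul_zero]), hEh,
      neg_smul, sub_eq_add_neg]
  have hE2 : lieExp E H = H - (2 : ℂ) • E := by
    rw [lieExp_apply_of_lie_lie_eq_zero (by rw [hEH, lie_smul, lie_self, smul_zero]), hEH,
      neg_smul, sub_eq_add_neg]
  have hE3 : lieExp E E = E := by
    rw [lieExp_apply_of_lie_lie_eq_zero (by rw [lie_self, lie_zero]), lie_self, add_zero]
  have hF1 : lieExp (-F) h = h - c • F := by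
    rw [lieExp_apply_of_lie_lie_eq_zero (by simp [hFh]), hFh, neg_smul, sub_eq_add_neg]
  have hF2 : lieExp (-F) E = E + H - F := by
    rw [lieExp_apply_of_lie_lie_lie_eq_zero (by simp [hFE, hFH]), hFE, hFH, smul_smul]
    norm_num
    abel
  refine ⟨((lieExp E).trans (lieExp (-F))).trans (lieExp E), ?_⟩
  change (lieExp E).toLinearEquiv ((lieExp (-F)).toLinearEquiv ((lieExp E).toLinearEquiv h)) = _
  have hE1' : (lieExp E).toLinearEquiv h = h - c • E := hE1
  have hE2' : (lieExp E).toLinearEquiv H = H - (2 : ℂ) • E := hE2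
  have hE3' : (lieExp E).toLinearEquiv E = E := hE3
  have hF1' : (lieExp (-F)).toLinearEquiv h = h - c • F := hF1
  have hF2' : (lieExp (-F)).toLinearEquiv E = E + H - F := hF2
  rw [hE1', map_sub, map_smul, hF1', hF2']
  have : h - c • F - c • (E + H - F) = h - c • E - c • H := by module
  rw [this, map_sub, map_sub, map_smul, map_smul, hE1', hE2', hE3']
  module

end lieExp

namespace F4

variable {L : Type*} [LieRing L] [LieAlgebra ℂ L] {x : ℕ → L} {h : L} {d : ℕ → ℤ}

set_option maxRecDepth 100000 in
lemma IsChevalley.lie_pos_neg (hx : IsChevalley x) {i : ℕ} (hi : i < 4) :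
    ⁅x (i + 4), x (i + 28)⁆ = x i := by
  have h : ∀ i < 4, null (scaleOnto (-1) [(i, 1)] (bilin T [(i + 4, 1)] [(i + 28, 1)])) = true := by
    decide +kernel
  simpa using hx.lie_eq_smul (h i hi)

namespace IsAdapted

lemma exists_reflection [FiniteDimensional ℂ L] (hd : IsAdapted x h d) {i : ℕ} (hi : i < 4) :
    ∃ y, IsAdapted y h fun j => d j - d i * cartan i j := by
  have hx := hd.isChevalley
  have hcartan : ∀ i < 4, cartan i i = 2 := by decide +kernel
  have hEF := hx.lie_pos_neg hi
  have hHE := hx.lie_cartan hi (by omega : i + 4 < 52)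
  have hHF := hx.lie_cartan hi (by omega : i + 28 < 52)
  rw [wt_add_four _ hi, hcartan i hi] at hHE
  rw [wt_add_twentyEight _ hi, hcartan i hi] at hHF
  have hhF := hd.lie_eq (by omega : i + 28 < 52)
  rw [wt_add_twentyEight _ hi] at hhF
  obtain ⟨g, hg⟩ := exists_lieEquiv_reflection hEF (by simpa using hHE) (by simpa using hHF)
    (hd.lie i hi) (by simpa using hhF)
  have hsymm (v : L) : g.symm (g v) = v := g.toLinearEquiv.symm_apply_apply v
  obtain ⟨a, ha⟩ := hd.mem
  refine ⟨_, hx.map_equiv g.symm, ⟨fun k => a k - if k = i then (d i : ℂ) else 0, ?_⟩,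
    fun j hj => ?_⟩
  · have : g h = ∑ k ∈ Finset.range 4, (a k - if k = i then (d i : ℂ) else 0) • x k := by
      simp only [sub_smul, Finset.sum_sub_distrib, ite_smul, zero_smul, Finset.sum_ite_eq',
        Finset.mem_range, if_pos hi, ← ha, hg]
    have := congrArg g.toLinearEquiv.symm this
    rw [map_sum] at this
    refine ((hsymm h).symm.trans this).trans (Finset.sum_congr rfl fun k _ => ?_)
    exact map_smul g.toLinearEquiv.symm _ _
  · have hlie : ⁅g h, x (j + 4)⁆ = ((d j - d i * cartan i j : ℤ) : ℂ) • x (j + 4) := by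
      rw [hg, sub_lie, smul_lie, hd.lie j hj, hx.lie_cartan hi (by omega), wt_cartan i hi j hj]
      push_cast
      module
    have := congrArg g.symm hlie
    rw [LieEquiv.map_lie, hsymm] at this
    exact this.trans (map_smul g.toLinearEquiv.symm _ _)

/-- Every adapted Chevalley basis can be replaced by a dominant one. -/
lemma exists_nonneg [FiniteDimensional ℂ L] (hd : IsAdapted x h d) :
    ∃ y d', IsAdapted y h d' ∧ ∀ j < 4, 0 ≤ d' j := by
  have hfin : {n : ℤ | (LieAlgebra.ad ℂ L h).HasEigenvalue (n : ℂ)}.Finite :=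
    (Module.End.finite_hasEigenvalue (LieAlgebra.ad ℂ L h)).preimage
      (Int.cast_injective.injOn)
  obtain ⟨B, hB⟩ := hfin.bddAbove
  let P (n : ℤ) : Prop := ∃ y d', IsAdapted y h d' ∧
    11 * d' 0 + 21 * d' 1 + 15 * d' 2 + 8 * d' 3 = n
  have hbdd : ∀ n, P n → n ≤ 55 * B := by
    rintro _ ⟨y, d', hd', rfl⟩
    have hle (j : ℕ) (hj : j < 4) : d' j ≤ B := hB <|
      Module.End.hasEigenvalue_of_hasEigenvector (x := y (j + 4))
        ⟨Module.End.mem_eigenspace_iff.2 (hd'.lie j hj), hd'.isChevalley.ne_zero (by omega)⟩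
    have := hle 0; have := hle 1; have := hle 2; have := hle 3
    omega
  obtain ⟨n, ⟨y, d', hd', hn⟩, hmax⟩ := Int.exists_greatest_of_bdd ⟨_, hbdd⟩ ⟨_, x, d, hd, rfl⟩
  refine ⟨y, d', hd', fun i hi => ?_⟩
  obtain ⟨y', hy'⟩ := hd'.exists_reflection hi
  have := hmax _ ⟨y', _, hy', rfl⟩
  have hcartan : ∀ i < 4, 11 * cartan i 0 + 21 * cartan i 1 + 15 * cartan i 2 + 8 * cartan i 3 = 1
    := by decide +kernel
  have := hcartan i hi
  nlinarith

set_option maxRecDepth 100000 in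
lemma le_two [FiniteDimensional ℂ L] {e f : L} (hd : IsAdapted x h d) (hd0 : ∀ j < 4, 0 ≤ d j)
    (ht : IsSl2Triple h e f) {i : ℕ} (hi : i < 4) : d i ≤ 2 := by
  have hx := hd.isChevalley
  by_contra! hlt
  have hhe : ⁅h, e⁆ = (2 : ℂ) • e := by
    rw [ht.lie_h_e_nsmul]
    module
  have hhF := hd.lie_eq (by omega : i + 28 < 52)
  rw [wt_add_twentyEight _ hi] at hhF
  have hlie : ⁅h, ⁅e, x (i + 28)⁆⁆ = ((2 - d i : ℤ) : ℂ) • ⁅e, x (i + 28)⁆ := by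
    rw [leibniz_lie, hhe, hhF, smul_lie, lie_smul]
    push_cast
    module
  have hT : ∀ i < 4, ∀ k < 24, k = i ∨ ∀ m < 24, coeff (T (k + 4) (i + 28)) (m + 28) = 0 := by
    decide +kernel
  have hzero : ⁅e, x (i + 28)⁆ = 0 := by
    refine hx.ext fun m hm => ?_
    rw [map_zero]
    by_cases hm' : m < 28
    · have := wt_nonneg hd0 hm'
      exact hd.coord_eq_zero_of_lie_eq_smul hlie hm (Int.cast_injective.ne (by omega))
    · conv_lhs => rw [← hx.sum_coord e]
      rw [sum_lie, map_sum]
      refine Finset.sum_eq_zero fun k hk => ?_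
      rw [Finset.mem_range] at hk
      have hcoord (hk' : wt d k ≠ 2) : hx.coord k e = 0 :=
        hd.coord_eq_zero_of_lie_eq_smul hhe hk (by exact_mod_cast hk')
      rw [smul_lie, map_smul, hx.lie, hx.coord_ev hm, smul_eq_mul, mul_eq_zero]
      by_cases hk4 : k < 4
      · exact .inl (hcoord (by rw [wt_eq_zero _ hk4]; norm_num))
      by_cases hk28 : 28 ≤ k
      · have := wt_nonpos hd0 hk28 hk
        exact .inl (hcoord (by omega))
      by_cases hki : k = i + 4
      · subst hki
        exact .inl (hcoord (by rw [wt_add_four _ hi]; omega))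
      · obtain ⟨k, rfl⟩ := Nat.exists_eq_add_of_le' (not_lt.1 hk4)
        obtain ⟨m, rfl⟩ := Nat.exists_eq_add_of_le' (not_lt.1 hm')
        have := (hT i hi k (by omega)).resolve_left (by omega) m (by omega)
        exact .inr (by rw [this, Int.cast_zero])
  obtain ⟨n, hn⟩ := exists_nat_of_lie_eq_smul ht (hx.ne_zero (by omega : i + 28 < 52)) hhF hzero
  have : -d i = n := by exact_mod_cast hn
  omega

end IsAdapted

end F4

end

noncomputable section

namespace F4

/-! ### Classification of the distinguished orbits -/

variable {L : Type*} [LieRing L] [LieAlgebra ℂ L]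

/-- The sequence starting with four given integers. -/
def seq (a b c d : ℤ) (j : ℕ) : ℤ := nth 0 [a, b, c, d] j

set_option maxRecDepth 100000 in
set_option synthInstance.maxSize 10000 in
lemma eq_of_card_eq : ∀ a < (3 : ℕ), ∀ b < (3 : ℕ), ∀ c < (3 : ℕ), ∀ d < (3 : ℕ),
    mult (seq a b c d) 0 = mult (seq a b c d) 2 →
    [a, b, c, d] ∈ [[2, 0, 2, 2], [2, 0, 2, 0], [0, 0, 2, 0], [2, 2, 2, 2]] := by
  decide +kernel

/-- The elements `r` and `s` form the nilpositive and neutral elements of a distinguished orbit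
with weighted Dynkin diagram `d`. -/
structure IsDistinguishedPair (s r : Comb) (d : ℕ → ℤ) : Prop where
  simple : ∀ j < 4, null (scaleOnto (-d j) [(j + 4, 1)] (bilin T s [(j + 4, 1)])) = true
  cartan : null (bilin T neutReg s) = true
  weight : null (scaleOnto (-2) r (bilin T s r)) = true
  distinguished : vanish [s, r] (spanEqs []) = true

/-- The nilpositive element of the regular orbit. -/
def repReg : Comb := [(7, 1), (4, 1), (5, 1), (6, 1)]

set_option maxRecDepth 100000 in
lemma isDistinguishedPair₁ : IsDistinguishedPair neutA₁ repA₁ (seq 2 0 2 2) := by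
  constructor <;> decide +kernel

set_option maxRecDepth 100000 in
lemma isDistinguishedPair₂ : IsDistinguishedPair neutA₂ repA₂ (seq 2 0 2 0) := by
  constructor <;> decide +kernel

set_option maxRecDepth 100000 in
lemma isDistinguishedPair₃ : IsDistinguishedPair neutA₃ repA₃ (seq 0 0 2 0) := by
  constructor <;> decide +kernel

set_option maxRecDepth 100000 in
lemma isDistinguishedPairReg : IsDistinguishedPair neutReg repReg (seq 2 2 2 2) := by
  constructor <;> decide +kernel

set_option maxRecDepth 100000 in
lemma vanish_simple :
    vanish [[(4, 1)], [(5, 1)], [(6, 1)], [(7, 1)], neutReg] (spanEqs []) = true := by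
  decide +kernel

lemma IsAdapted.eq_ev {x : ℕ → L} {h : L} {d : ℕ → ℤ} (hd : IsAdapted x h d) {s r : Comb}
    (hs : IsDistinguishedPair s r d) : h = ev x s := by
  have hx := hd.isChevalley
  rw [← sub_eq_zero, eq_sum_of_vanish hx vanish_simple (v := h - ev x s)]
  · rfl
  have hsimple (j : ℕ) (hj : j < 4) : ⁅ev x [(j + 4, 1)], h - ev x s⁆ = 0 := by
    have := hx.lie_eq_smul (hs.simple j hj)
    rw [← lie_skew, sub_lie, this]
    simp [hd.lie j hj]
  simp only [List.mem_cons, List.not_mem_nil, or_false, forall_eq_or_imp, forall_eq]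
  refine ⟨hsimple 0 (by norm_num), hsimple 1 (by norm_num), hsimple 2 (by norm_num),
    hsimple 3 (by norm_num), ?_⟩
  obtain ⟨a, ha⟩ := hd.mem
  rw [lie_sub, hx.lie_ev_ev, ev_eq_zero_of_null x hs.cartan, sub_zero, ha, lie_sum]
  refine Finset.sum_eq_zero fun i hi => ?_
  rw [Finset.mem_range] at hi
  rw [lie_smul, (isAdapted_neutReg hx).lie_eq (by omega), wt_eq_zero _ hi]
  simp

set_option maxRecDepth 100000 in
lemma finrank_centralizer_repReg {x : ℕ → L} (hx : IsChevalley x) :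
    Module.finrank ℂ (centralizer L (ev x repReg)) = 4 := by
  have hvanish : vanish [repReg] (spanEqs [(7, repReg), (19, [(19, 1), (17, -2), (18, 1)]),
      (23, [(23, 1), (22, -1)]), (27, [(27, 1)])]) = true := by decide +kernel
  let P (i : Fin 4) : ℕ × Comb := nth (0, []) [(7, repReg), (19, [(19, 1), (17, -2), (18, 1)]),
    (23, [(23, 1), (22, -1)]), (27, [(27, 1)])] i
  have hlt : ∀ i, (P i).1 < 52 := by decide +kernel
  have hnull : ∀ i, null (bilin T (P i).2 repReg) = true := by decide +kernel
  have hcoeff : ∀ i j, coeff (P j).2 (P i).1 = if j = i then 1 else 0 := by decide +kernel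
  refine (hx.finrank_eq_card (centralizer L (ev x repReg)).toSubmodule (fun i => (P i).1)
    (fun i => ev x (P i).2) (fun i => ?_) (fun i j => ?_) fun v hv => ?_).trans
    (Fintype.card_fin 4)
  · change ⁅_, _⁆ = _
    rw [hx.lie_ev_ev, ev_eq_zero_of_null x (hnull i)]
  · rw [hx.coord_ev (hlt i), hcoeff]
    split_ifs <;> simp
  · have hv' : ⁅v, ev x repReg⁆ = 0 := hv
    refine (eq_sum_of_vanish hx hvanish (v := v) ?_).trans ?_
    · simp [← lie_skew (ev x repReg) v, hv']
    · rw [Fin.sum_univ_four, List.map_cons, List.map_cons, List.map_cons, List.map_cons,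
        List.map_nil, List.sum_cons, List.sum_cons, List.sum_cons, List.sum_cons, List.sum_nil,
        add_zero, ← add_assoc, ← add_assoc]
      rfl

variable [FiniteDimensional ℂ L] [LieAlgebra.IsKilling ℂ L] {e h f : L}

/-- Elements of distinguished orbits with the same neutral element are conjugate. -/
lemma IsAdapted.exists_isChevalley {x : ℕ → L} {d : ℕ → ℤ} (hd : IsAdapted x h d) {s r : Comb}
    (hs : IsDistinguishedPair s r d) (ht : IsSl2Triple h e f) (hdist : IsDistinguished L e) :
    ∃ y : ℕ → L, IsChevalley y ∧ ev y s = h ∧ ev y r = e := by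
  have hx := hd.isChevalley
  obtain rfl := hd.eq_ev hs
  let K := (LieAlgebra.ad ℂ L (ev x s)).eigenspace 0
  let W := (LieAlgebra.ad ℂ L (ev x s)).eigenspace 2
  have hK (u : L) : u ∈ K ↔ ⁅ev x s, u⁆ = 0 := by
    simp [K]
  have hW (u : L) : u ∈ W ↔ ⁅ev x s, u⁆ = (2 : ℂ) • u := by
    simp [W]
  obtain ⟨hdim, hsurj⟩ := finrank_eigenspace_zero_eq_two_and_surjective ht hdist
  have hr : ev x r ∈ W := (hW _).2 (by simpa using hx.lie_eq_smul hs.weight)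
  have he : e ∈ W := (hW _).2 (by rw [ht.lie_h_e_nsmul]; module)
  have hKW : ∀ u ∈ K, ∀ w ∈ W, ⁅u, w⁆ ∈ W := by
    intro u hu w hw
    rw [hW, leibniz_lie, (hK u).1 hu, (hW w).1 hw, zero_lie, zero_add, lie_smul]
  let ψ : K →ₗ[ℂ] W := ((LieAlgebra.ad ℂ L (ev x r)).restrict (p := K) (q := W) fun u hu => by
    rw [LieAlgebra.ad_apply (R := ℂ), ← lie_skew]
    exact W.neg_mem (hKW u hu _ hr))
  have hψ : Function.Injective ψ := by
    refine (injective_iff_map_eq_zero ψ).2 fun u hu => Subtype.ext ?_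
    have hu' : ⁅ev x r, (u : L)⁆ = 0 := congrArg Subtype.val hu
    refine (eq_sum_of_vanish hx hs.distinguished (v := u) ?_).trans rfl
    simpa using ⟨(hK u).1 u.2, hu'⟩
  have hψ' : Function.Surjective ψ :=
    (LinearMap.injective_iff_surjective_of_finrank_eq_finrank hdim).1 hψ
  obtain ⟨g, hg, hgh⟩ := exists_lieEquiv_of_surjective K W hKW hdim hr he
    (fun w hw => by
      obtain ⟨u, hu⟩ := hψ' ⟨-w, W.neg_mem hw⟩
      have hu' : ⁅ev x r, (u : L)⁆ = -w := congrArg Subtype.val hu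
      exact ⟨u, u.2, by rw [← lie_skew, hu', neg_neg]⟩)
    (fun w hw => by
      obtain ⟨u, hu, hue⟩ := hsurj w ((hW w).1 hw)
      exact ⟨u, (hK u).2 hu, hue⟩)
  refine ⟨_, hx.map_equiv g, ?_, ?_⟩
  · refine (map_ev x (g : L →+ L) s).symm.trans (hgh _ fun u hu => ?_)
    rw [← lie_skew, (hK u).1 hu, neg_zero]
  · exact (map_ev x (g : L →+ L) r).symm.trans hg

end F4

end

/-- Distinguished non-regular nilpotent elements of the complex simple
Lie algebra of type corresponding to `LieAlgebra.f₄` satisfy property (P). -/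
theorem propertyP_of_type_8
    (L : Type*) [LieRing L] [LieAlgebra ℂ L] [FiniteDimensional ℂ L]
    [LieAlgebra.IsSimple ℂ L]
    (htype : Nonempty (L ≃ₗ⁅ℂ⁆ LieAlgebra.f₄ ℂ))
    (e h f : L) (ht : IsSl2Triple h e f) (he : IsNilpotent (LieAlgebra.ad ℂ L e))
    (hdist : IsDistinguished L e)
    (hnonreg : Module.finrank ℂ ↥(centralizer L e) ≠ LieAlgebra.rank ℂ L) :
    PropertyP L e h f := by
  obtain ⟨φ⟩ := htype
  obtain ⟨x₀, hx₀⟩ := F4.exists_isChevalley φ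
  obtain ⟨x₁, d₁, hd₁⟩ := F4.exists_isAdapted hx₀ ht hdist
  obtain ⟨x, d, hd, hd0⟩ := hd₁.exists_nonneg
  have hcard : F4.mult d 0 = F4.mult d 2 := by
    rw [← hd.finrank_eigenspace, ← hd.finrank_eigenspace, Int.cast_zero, Int.cast_ofNat]
    exact (finrank_eigenspace_zero_eq_two_and_surjective ht hdist).1
  have hlt (j : ℕ) (hj : j < 4) : ∃ n : ℕ, n < 3 ∧ (n : ℤ) = d j := by
    have := hd.le_two hd0 ht hj
    have := hd0 j hj
    exact ⟨(d j).toNat, by omega, by omega⟩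
  obtain ⟨n₀, hn₀, h₀⟩ := hlt 0 (by norm_num)
  obtain ⟨n₁, hn₁, h₁⟩ := hlt 1 (by norm_num)
  obtain ⟨n₂, hn₂, h₂⟩ := hlt 2 (by norm_num)
  obtain ⟨n₃, hn₃, h₃⟩ := hlt 3 (by norm_num)
  have hseq : ∀ j < 4, d j = F4.seq n₀ n₁ n₂ n₃ j := by
    intro j hj
    interval_cases j <;> simp [F4.seq, F4.nth_eq, *]
  have hwt : F4.wt d = F4.wt (F4.seq n₀ n₁ n₂ n₃) := by
    funext k
    simp [F4.wt, hseq]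
  have hd' : F4.IsAdapted x h (F4.seq n₀ n₁ n₂ n₃) :=
    ⟨hd.isChevalley, hd.mem, fun j hj => by rw [hd.lie j hj, hseq j hj]⟩
  have hmem := F4.eq_of_card_eq n₀ hn₀ n₁ hn₁ n₂ hn₂ n₃ hn₃ (by simpa [F4.mult, ← hwt] using hcard)
  simp only [List.mem_cons, List.cons.injEq, List.not_mem_nil, or_false, and_true] at hmem
  rcases hmem with ⟨rfl, rfl, rfl, rfl⟩ | ⟨rfl, rfl, rfl, rfl⟩ | ⟨rfl, rfl, rfl, rfl⟩ |
    ⟨rfl, rfl, rfl, rfl⟩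
  · obtain ⟨y, hy, rfl, rfl⟩ := hd'.exists_isChevalley F4.isDistinguishedPair₁ ht hdist
    exact F4.propertyP_repA₁ hy ht
  · obtain ⟨y, hy, rfl, rfl⟩ := hd'.exists_isChevalley F4.isDistinguishedPair₂ ht hdist
    exact F4.propertyP_repA₂ hy ht
  · obtain ⟨y, hy, rfl, rfl⟩ := hd'.exists_isChevalley F4.isDistinguishedPair₃ ht hdist
    exact F4.propertyP_repA₃ hy ht
  · obtain ⟨y, hy, rfl, rfl⟩ := hd'.exists_isChevalley F4.isDistinguishedPairReg ht hdist
    exact absurd ((F4.finrank_centralizer_repReg hy).trans (F4.rank_eq_four hy).symm) hnonreg
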